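/- arXiv:1103.5519 — 2 statements merged into one kernel-verified Lean document; each statement's English description precedes it below -/
import Mathlib

section
/- Let L be an odd unimodular lattice in dimension 41 having minimum norm 4. Then L has kissing number 15170 if and only if σ(L) = 17. -/
open scoped RealInnerProductSpace

noncomputable section

/-- The norm `(x, x)` of a vector `x ∈ ℝⁿ` (squared Euclidean length). -/
def normOf {n : ℕ} (x : EuclideanSpace ℝ (Fin n)) : ℝ := ⟪x, x⟫

/-- The dual `L* = {x ∈ ℝⁿ : (x,y) ∈ ℤ for all y ∈ L}` of a set of vectors. -/
def dualSet {n : ℕ} (L : Set (EuclideanSpace ℝ (Fin n))) : Set (EuclideanSpace ℝ (Fin n)) :=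
  {x | ∀ y ∈ L, ∃ m : ℤ, ⟪x, y⟫ = (m : ℝ)}

/-- `L` is a unimodular lattice: `L = L*`. -/
def IsUnimodularLattice {n : ℕ} (L : Set (EuclideanSpace ℝ (Fin n))) : Prop :=
  L = dualSet L

/-- `L` is odd: some vector of `L` has odd (integral) norm. -/
def IsOddLattice {n : ℕ} (L : Set (EuclideanSpace ℝ (Fin n))) : Prop :=
  ∃ x ∈ L, ∃ m : ℤ, Odd m ∧ normOf x = (m : ℝ)

/-- The even sublattice `L₀ = {x ∈ L : (x,x) even}`. -/
def evenSublattice {n : ℕ} (L : Set (EuclideanSpace ℝ (Fin n))) :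
    Set (EuclideanSpace ℝ (Fin n)) :=
  {x | x ∈ L ∧ ∃ m : ℤ, normOf x = 2 * (m : ℝ)}

/-- The shadow `S(L) = L₀* \ L`. -/
def shadow {n : ℕ} (L : Set (EuclideanSpace ℝ (Fin n))) : Set (EuclideanSpace ℝ (Fin n)) :=
  dualSet (evenSublattice L) \ L

/-- `L` has minimum norm `r`: `r` is the least norm among nonzero vectors of `L`. -/
def HasMinNorm {n : ℕ} (L : Set (EuclideanSpace ℝ (Fin n))) (r : ℝ) : Prop :=
  IsLeast {s : ℝ | ∃ x ∈ L, x ≠ 0 ∧ normOf x = s} r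

/-- The shadow `S(L)` has minimum norm `r`. -/
def HasShadowMinNorm {n : ℕ} (L : Set (EuclideanSpace ℝ (Fin n))) (r : ℝ) : Prop :=
  IsLeast {s : ℝ | ∃ x ∈ shadow L, normOf x = s} r

/-- `σ(L) = r`, i.e. `4 · min(S(L)) = r`. -/
def HasSigma {n : ℕ} (L : Set (EuclideanSpace ℝ (Fin n))) (r : ℝ) : Prop :=
  ∃ s : ℝ, HasShadowMinNorm L s ∧ r = 4 * s

/-- The number of vectors of norm `r` in `L`; when `L` has minimum norm `r`,
this is the kissing number of `L`. -/
def numVecsOfNorm {n : ℕ} (L : Set (EuclideanSpace ℝ (Fin n))) (r : ℝ) : ℕ :=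
  Set.ncard {x ∈ L | normOf x = r}

open UpperHalfPlane in
lemma disc_T (τ : ℍ) :
    ModularForm.discriminant ((1 : ℝ) +ᵥ τ) = ModularForm.discriminant τ := by
  have := congrFun ModularForm.discriminant_T_invariant τ
  rw [ModularForm.SL_slash_apply, UpperHalfPlane.modular_T_smul] at this
  have h : denom ((ModularGroup.T : Matrix.SpecialLinearGroup (Fin 2) ℤ) : GL (Fin 2) ℝ) τ = 1 := by
    change ((((0 : ℤ) : ℝ)) : ℂ) * (τ : ℂ) + ((((1 : ℤ) : ℝ)) : ℂ) = 1
    simp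
  rw [h, one_zpow, mul_one] at this
  exact this

open UpperHalfPlane in
lemma disc_S (τ : ℍ) : ModularForm.discriminant (ModularGroup.S • τ) =
    (τ : ℂ) ^ 12 * ModularForm.discriminant τ := by
  have := congrFun ModularForm.discriminant_S_invariant τ
  rw [ModularForm.SL_slash_apply] at this
  rw [ModularGroup.denom_S] at this
  rw [← this]
  have h0 : (τ : ℂ) ≠ 0 := τ.ne_zero
  rw [zpow_neg, mul_comm ((τ : ℂ) ^ 12), mul_assoc]
  have : ((τ : ℂ) ^ (12 : ℤ))⁻¹ * (τ : ℂ) ^ 12 = 1 := by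
    rw [zpow_ofNat]
    exact inv_mul_cancel₀ (pow_ne_zero _ h0)
  rw [this, mul_one]

open Complex Filter Topology Asymptotics UpperHalfPlane in
open scoped ModularForm MatrixGroups in
set_option maxHeartbeats 1000000 in
/-- If a triple of holomorphic functions is permuted by the modular group (up to eighth roots of
unity) with weight `41/2` and vanishes to high order at infinity then it is zero. -/
lemma modular_vanish (f1 f2 f3 : ℂ → ℂ)
    (hd1 : DifferentiableOn ℂ f1 {z | 0 < z.im}) (hd2 : DifferentiableOn ℂ f2 {z | 0 < z.im})
    (hd3 : DifferentiableOn ℂ f3 {z | 0 < z.im})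
    (hT1 : ∀ z : ℂ, 0 < z.im → f1 (z + 1) = f2 z) (hT2 : ∀ z : ℂ, 0 < z.im → f2 (z + 1) = f1 z)
    (hT3 : ∀ z : ℂ, 0 < z.im → f3 (z + 1) ^ 8 = f3 z ^ 8)
    (hS1 : ∀ z : ℂ, 0 < z.im → f1 (-1 / z) ^ 8 = z ^ 164 * f1 z ^ 8)
    (hS2 : ∀ z : ℂ, 0 < z.im → f2 (-1 / z) ^ 8 = z ^ 164 * f3 z ^ 8)
    (hS3 : ∀ z : ℂ, 0 < z.im → f3 (-1 / z) ^ 8 = z ^ 164 * f2 z ^ 8)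
    (a b : ℝ) (hab : 41 / 4 < 2 * a + b)
    (h1 : (fun τ : ℍ => f1 τ) =O[atImInfty] fun τ => Real.exp (-Real.pi * a * τ.im))
    (h3 : (fun τ : ℍ => f3 τ) =O[atImInfty] fun τ => Real.exp (-Real.pi * b * τ.im)) :
    (∀ z : ℂ, 0 < z.im → f1 z = 0) ∧ (∀ z : ℂ, 0 < z.im → f3 z = 0) := by
  have mk : ∀ f : ℂ → ℂ, DifferentiableOn ℂ f {z | 0 < z.im} →
      MDifferentiable (modelWithCornersSelf ℂ ℂ) (modelWithCornersSelf ℂ ℂ) (fun τ : ℍ => f τ) := by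
    intro f hf
    rw [UpperHalfPlane.mdifferentiable_iff]
    refine hf.congr ?_
    intro z hz
    simp [Function.comp, ofComplex_apply_of_im_pos hz]
  have m1 := mk f1 hd1
  have m2 := mk f2 hd2
  have m3 := mk f3 hd3
  set P : ℍ → ℂ := fun τ => f1 τ * f2 τ * f3 τ with hP
  have mP : MDifferentiable (modelWithCornersSelf ℂ ℂ) (modelWithCornersSelf ℂ ℂ) P :=
    (m1.mul m2).mul m3
  set D : ℍ → ℂ := ModularForm.discriminant with hD
  have mD : MDifferentiable (modelWithCornersSelf ℂ ℂ) (modelWithCornersSelf ℂ ℂ) D :=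
    CuspForm.discriminant.holo'
  set g : ℍ → ℂ := fun τ => P τ ^ 8 / D τ ^ 41 with hg
  have hDne : ∀ τ, D τ ≠ 0 := ModularForm.discriminant_ne_zero
  have mg : MDifferentiable (modelWithCornersSelf ℂ ℂ) (modelWithCornersSelf ℂ ℂ) g := by
    have := (mP.pow 8).div (mD.pow 41) (fun τ => pow_ne_zero _ (hDne τ))
    exact this
  -- growth
  have h2 : (fun τ : ℍ => f2 τ) =O[atImInfty] fun τ => Real.exp (-Real.pi * a * τ.im) := by
    have ht : Tendsto (fun τ : ℍ => (1 : ℝ) +ᵥ τ) atImInfty atImInfty := by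
      rw [atImInfty, tendsto_comap_iff]
      simpa [Function.comp_def] using tendsto_comap
    have := h1.comp_tendsto ht
    refine (this.congr_left ?_).congr_right ?_
    · intro τ
      simp only [Function.comp, UpperHalfPlane.coe_vadd]
      rw [← hT1 τ τ.2, add_comm]; simp
    · intro τ
      simp
  have hgr : (fun τ => P τ ^ 8) =O[atImInfty]
      fun τ => Real.exp (-Real.pi * (8 * (2 * a + b)) * τ.im) := by
    refine (((h1.mul h2).mul h3).pow 8).congr_right ?_
    intro τ
    rw [← Real.exp_add, ← Real.exp_add, ← Real.exp_nat_mul]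
    congr 1
    push_cast
    ring
  have hDg : (fun τ : ℍ => Real.exp (-Real.pi * 82 * τ.im)) =O[atImInfty] fun τ => D τ ^ 41 := by
    refine (ModularForm.exp_isBigO_discriminant.pow 41).congr_left ?_
    intro τ
    rw [← Real.exp_nat_mul]
    congr 1
    push_cast
    ring
  have hlim : Tendsto g atImInfty (𝓝 0) := by
    have e1 : (fun τ : ℍ => Real.exp (-Real.pi * (8 * (2 * a + b)) * τ.im)) =o[atImInfty]
        fun τ : ℍ => Real.exp (-Real.pi * 82 * τ.im) := by
      rw [Real.isLittleO_exp_comp_exp_comp]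
      have : (fun τ : ℍ => -Real.pi * 82 * τ.im - -Real.pi * (8 * (2 * a + b)) * τ.im) =
        fun τ : ℍ => (Real.pi * (8 * (2 * a + b) - 82)) * τ.im := by ext; ring
      rw [this]
      apply Tendsto.const_mul_atTop (mul_pos Real.pi_pos (by linarith))
      exact tendsto_comap
    have e2 := (hgr.trans_isLittleO e1).trans_isBigO hDg
    have e3 := e2.tendsto_div_nhds_zero
    exact e3
  -- invariance
  have hDT : ∀ τ : ℍ, D ((1 : ℝ) +ᵥ τ) = D τ := disc_T
  have hDS : ∀ τ : ℍ, D (ModularGroup.S • τ) = (τ : ℂ) ^ 12 * D τ := disc_S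
  have gT : g ∣[(0 : ℤ)] ModularGroup.T = g := by
    ext τ
    rw [ModularForm.SL_slash_apply, UpperHalfPlane.modular_T_smul]
    simp only [neg_zero, zpow_zero, mul_one, hg, hDT, hP]
    congr 1
    simp only [UpperHalfPlane.coe_vadd, ofReal_one, mul_pow]
    rw [add_comm, hT1 τ τ.2, hT2 τ τ.2, hT3 τ τ.2]
    ring
  have gS : g ∣[(0 : ℤ)] ModularGroup.S = g := by
    ext τ
    rw [ModularForm.SL_slash_apply]
    have h0 : (τ : ℂ) ≠ 0 := τ.ne_zero
    have hc : ((ModularGroup.S • τ : ℍ) : ℂ) = -1 / (τ : ℂ) := by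
      rw [UpperHalfPlane.modular_S_smul]
      simp [neg_div, inv_neg]
    simp only [neg_zero, zpow_zero, mul_one, hg, hDS, hP, hc, mul_pow]
    rw [hS1 τ τ.2, hS2 τ τ.2, hS3 τ τ.2]
    have := hDne τ
    field_simp
  have ginv := SlashInvariantForm.slash_action_generators_SL2Z gS gT
  let G : ModularForm (Matrix.SpecialLinearGroup.mapGL ℝ : Matrix.SpecialLinearGroup (Fin 2) ℤ →* _).range 0 :=
    { toFun := g
      slash_action_eq' := fun _ ⟨γ, hγ⟩ ↦ hγ ▸ ginv γ
      holo' := mg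
      bdd_at_cusps' {c} hc := by
        rw [Subgroup.IsArithmetic.isCusp_iff_isCusp_SL2Z] at hc
        rw [OnePoint.isBoundedAt_iff_forall_SL2Z hc]
        intro γ _
        rw [ginv γ, IsBoundedAtImInfty, BoundedAtFilter]
        exact hlim.isBigO_one ℝ }
  obtain ⟨c, hc⟩ := ModularFormClass.levelOne_weight_zero_const G
  have hc' : g = Function.const _ c := hc
  have hc0 : c = 0 := by
    rw [hc'] at hlim
    exact tendsto_nhds_unique tendsto_const_nhds hlim
  have hP0 : P = 0 := by
    ext τ
    have : g τ = 0 := by rw [hc', hc0]; rfl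
    simp only [hg, div_eq_zero_iff] at this
    rcases this with h | h
    · simpa using h
    · exact absurd h (pow_ne_zero _ (hDne τ))
  have him : ∀ z : ℂ, 0 < z.im → 0 < (z + 1).im := by intro z hz; simpa using hz
  have himS : ∀ z : ℂ, 0 < z.im → 0 < (-1 / z).im := by
    intro z hz
    have := (UpperHalfPlane.mk z hz).im_inv_neg_coe_pos
    simpa [neg_div, inv_neg] using this
  have n0 : ∀ z : ℂ, 0 < z.im → z ^ 164 ≠ 0 := by
    intro z hz; apply pow_ne_zero; rintro rfl; simp at hz
  have k12 : (∀ z : ℂ, 0 < z.im → f1 z = 0) → (∀ z : ℂ, 0 < z.im → f2 z = 0) := by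
    intro h z hz
    rw [← hT1 z hz]; exact h _ (him z hz)
  have k21 : (∀ z : ℂ, 0 < z.im → f2 z = 0) → (∀ z : ℂ, 0 < z.im → f1 z = 0) := by
    intro h z hz
    rw [← hT2 z hz]; exact h _ (him z hz)
  have k23 : (∀ z : ℂ, 0 < z.im → f2 z = 0) → (∀ z : ℂ, 0 < z.im → f3 z = 0) := by
    intro h z hz
    have := hS2 z hz
    rw [h _ (himS z hz)] at this
    have h' := n0 z hz
    simpa [h'] using this.symm
  have k32 : (∀ z : ℂ, 0 < z.im → f3 z = 0) → (∀ z : ℂ, 0 < z.im → f2 z = 0) := by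
    intro h z hz
    have := hS3 z hz
    rw [h _ (himS z hz)] at this
    have h' := n0 z hz
    simpa [h'] using this.symm
  have hor : (∀ z : ℂ, 0 < z.im → f1 z = 0) ∨ (∀ z : ℂ, 0 < z.im → f2 z = 0) ∨
      (∀ z : ℂ, 0 < z.im → f3 z = 0) := by
    have e : ((fun τ : ℍ => f1 τ) * (fun τ : ℍ => f2 τ)) * (fun τ : ℍ => f3 τ) = 0 := hP0
    rw [UpperHalfPlane.mul_eq_zero_iff (m1.mul m2) m3, UpperHalfPlane.mul_eq_zero_iff m1 m2] at e
    rcases e with (e | e) | e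
    · left; intro z hz; exact congrFun e ⟨z, hz⟩
    · right; left; intro z hz; exact congrFun e ⟨z, hz⟩
    · right; right; intro z hz; exact congrFun e ⟨z, hz⟩
  tauto

/-- A family of real exponents `N i ≥ 0` whose theta series converges. -/
structure ThetaFam {ι : Type*} (N : ι → ℝ) : Prop where
  nonneg : ∀ i, 0 ≤ N i
  summ : ∀ t : ℝ, 0 < t → Summable fun i => Real.exp (-Real.pi * t * N i)

/-- The theta series `∑ exp (π i z N_j)`. -/
def Th {ι : Type*} (N : ι → ℝ) (z : ℂ) : ℂ := ∑' i, Complex.exp (Real.pi * Complex.I * z * N i)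

lemma th_norm (z : ℂ) (x : ℝ) :
    ‖Complex.exp (Real.pi * Complex.I * z * x)‖ = Real.exp (-Real.pi * z.im * x) := by
  rw [Complex.norm_exp]
  congr 1
  simp

lemma ThetaFam.summable {ι : Type*} {N : ι → ℝ} (h : ThetaFam N) {z : ℂ} (hz : 0 < z.im) :
    Summable fun i => Complex.exp (Real.pi * Complex.I * z * N i) := by
  apply Summable.of_norm
  simp only [th_norm]
  exact h.summ _ hz

lemma ThetaFam.diff {ι : Type*} {N : ι → ℝ} (h : ThetaFam N) :
    DifferentiableOn ℂ (Th N) {z | 0 < z.im} := by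
  intro z hz
  have hz' : 0 < z.im := hz
  have ho : IsOpen {w : ℂ | z.im / 2 < w.im} := isOpen_lt continuous_const Complex.continuous_im
  have : DifferentiableOn ℂ (Th N) {w : ℂ | z.im / 2 < w.im} := by
    apply Complex.differentiableOn_tsum_of_summable_norm (h.summ (z.im / 2) (by linarith)) _ ho
    · intro i w hw
      rw [th_norm]
      apply Real.exp_le_exp.mpr
      have h1 : z.im / 2 < w.im := hw
      have h2 := h.nonneg i
      have h3 := mul_le_mul_of_nonneg_right h1.le h2
      have := mul_le_mul_of_nonneg_left h3 Real.pi_pos.le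
      linarith
    · intro i
      fun_prop
  exact (this.differentiableAt (ho.mem_nhds (by simp only [Set.mem_setOf_eq]; linarith))).differentiableWithinAt

open UpperHalfPlane Asymptotics in
/-- Truncation of a theta series. -/
lemma ThetaFam.tail {ι : Type*} {N : ι → ℝ} (h : ThetaFam N) (s : Finset ι) (r : ℝ)
    (hs : ∀ i, i ∉ s → r ≤ N i) :
    (fun τ : ℍ => Th N τ - ∑ i ∈ s, Complex.exp (Real.pi * Complex.I * τ * N i)) =O[atImInfty]
      fun τ => Real.exp (-Real.pi * r * τ.im) := by
  classical
  refine IsBigO.of_bound (Real.exp (Real.pi * r) * ∑' i, Real.exp (-Real.pi * 1 * N i)) ?_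
  have : ∀ᶠ τ : ℍ in atImInfty, 1 ≤ τ.im := by
    rw [Filter.Eventually, atImInfty_mem]
    exact ⟨1, fun z hz => hz⟩
  filter_upwards [this] with τ hτ
  have hsum := h.summable τ.2
  have e : Th N τ - ∑ i ∈ s, Complex.exp (Real.pi * Complex.I * τ * N i) =
      ∑' i : {i // i ∉ s}, Complex.exp (Real.pi * Complex.I * τ * N i) := by
    rw [Th, ← hsum.sum_add_tsum_subtype_compl s]
    ring
  rw [e]
  have hs1 := h.summ 1 one_pos
  have hs2 : Summable fun i : {i // i ∉ s} => Real.exp (-Real.pi * 1 * N i) :=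
    hs1.subtype _
  have hb : ∀ i : {i // i ∉ s}, ‖Complex.exp (Real.pi * Complex.I * τ * N i)‖ ≤
      Real.exp (Real.pi * r) * Real.exp (-Real.pi * r * τ.im) * Real.exp (-Real.pi * 1 * N i) := by
    intro i
    rw [th_norm, ← Real.exp_add, ← Real.exp_add]
    apply Real.exp_le_exp.mpr
    have h1 := hs i i.2
    have h2 : 0 ≤ (τ.im - 1) * (N i - r) := mul_nonneg (by linarith) (by linarith)
    have := mul_nonneg Real.pi_pos.le h2
    simp only [coe_im]
    nlinarith
  calc _ ≤ ∑' i : {i // i ∉ s}, Real.exp (Real.pi * r) * Real.exp (-Real.pi * r * τ.im) *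
        Real.exp (-Real.pi * 1 * N i) :=
        tsum_of_norm_bounded (hs2.mul_left _).hasSum hb
    _ = Real.exp (Real.pi * r) * Real.exp (-Real.pi * r * τ.im) *
        ∑' i : {i // i ∉ s}, Real.exp (-Real.pi * 1 * N i) := tsum_mul_left
    _ ≤ Real.exp (Real.pi * r) * Real.exp (-Real.pi * r * τ.im) *
        ∑' i, Real.exp (-Real.pi * 1 * N i) := by
        apply mul_le_mul_of_nonneg_left _ (by positivity)
        exact hs1.tsum_subtype_le _ _ (fun i => (Real.exp_pos _).le)
    _ = _ := by
        rw [Real.norm_of_nonneg (Real.exp_pos _).le]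
        ring

lemma ThetaFam.ne_zero {ι : Type*} [Nonempty ι] {N : ι → ℝ} (h : ThetaFam N) (t : ℝ) (ht : 0 < t) :
    Th N (Complex.I * t) ≠ 0 := by
  have e : ∀ i, Complex.exp (Real.pi * Complex.I * (Complex.I * t) * N i) =
      ((Real.exp (-Real.pi * t * N i) : ℝ) : ℂ) := by
    intro i
    push_cast
    congr 1
    linear_combination (Real.pi * t * N i : ℂ) * Complex.I_mul_I
  rw [Th, tsum_congr e, ← Complex.ofReal_tsum, Complex.ofReal_ne_zero]
  exact ((h.summ t ht).tsum_pos (fun i => (Real.exp_pos _).le) (Classical.arbitrary ι)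
    (Real.exp_pos _)).ne'

open Complex in
lemma zfam_summable (c : ℝ) (t : ℝ) (ht : 0 < t) :
    Summable fun n : ℤ => Real.exp (-Real.pi * t * ((n : ℝ) ^ 2 + c * n)) := by
  have := ((summable_jacobiTheta₂_term_iff (c * t / 2 * I) (t * I)).mpr (by simpa using ht)).norm
  refine this.congr ?_
  intro n
  rw [norm_jacobiTheta₂_term]
  congr 1
  have e1 : (t * I : ℂ).im = t := by simp
  have e2 : ((c : ℂ) * t / 2 * I : ℂ).im = c * t / 2 := by
    have : ((c : ℂ) * t / 2 * I : ℂ) = ((c * t / 2 : ℝ) : ℂ) * I := by push_cast; ring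
    rw [this]; simp
  rw [e1, e2]
  ring

/-- exponents `n ^ 2` -/
def N3 (n : ℤ) : ℝ := (n : ℝ) ^ 2
/-- exponents `n ^ 2 + n` -/
def N2 (n : ℤ) : ℝ := (n : ℝ) ^ 2 + n

lemma fam3 : ThetaFam N3 where
  nonneg i := sq_nonneg _
  summ t ht := by simpa [N3] using zfam_summable 0 t ht

lemma N2_eq (n : ℤ) : N2 n = ((n * (n + 1) : ℤ) : ℝ) := by
  rw [N2]; push_cast; ring

lemma fam2 : ThetaFam N2 where
  nonneg i := by
    rw [N2_eq]
    have : 0 ≤ i * (i + 1) := by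
      rcases le_or_gt 0 i with h | h
      · positivity
      · exact mul_nonneg_of_nonpos_of_nonpos h.le (by omega)
    exact_mod_cast this
  summ t ht := by simpa [N2] using zfam_summable 1 t ht

def t3 (z : ℂ) : ℂ := Th N3 z
def t4 (z : ℂ) : ℂ := Th N3 (z + 1)
def t2 (z : ℂ) : ℂ := Complex.exp (Real.pi * Complex.I * z / 4) * Th N2 z

/-- the automorphy factor of weight `1/2` -/
def hh (z : ℂ) : ℂ := (-Complex.I * z) ^ (1 / 2 : ℂ)

lemma hh_sq (z : ℂ) : hh z ^ 2 = -Complex.I * z := by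
  rw [hh, ← Complex.cpow_nat_mul]
  norm_num

lemma hh_ne (z : ℂ) (hz : 0 < z.im) : hh z ≠ 0 := by
  intro h
  have := hh_sq z
  rw [h] at this
  have hz0 : z ≠ 0 := by rintro rfl; simp at hz
  have : Complex.I * z = 0 := by linear_combination this
  simp [hz0] at this

lemma t3_jac (z : ℂ) : t3 z = jacobiTheta₂ 0 z := by
  rw [t3, Th, jacobiTheta₂]
  apply tsum_congr
  intro n
  rw [jacobiTheta₂_term, N3]
  congr 1
  push_cast
  ring

lemma exp_pi_int (n : ℤ) (h : Even n) : Complex.exp (Real.pi * Complex.I * n) = 1 := by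
  obtain ⟨k, rfl⟩ := h
  rw [Complex.exp_eq_one_iff]
  refine ⟨k, ?_⟩
  push_cast
  ring

lemma t4_jac (z : ℂ) : t4 z = jacobiTheta₂ (1 / 2) z := by
  rw [t4, Th, jacobiTheta₂]
  apply tsum_congr
  intro n
  rw [jacobiTheta₂_term, N3]
  have h := exp_pi_int (n * (n - 1)) (Int.even_mul_pred_self n)
  have : (Real.pi * Complex.I * (z + 1) * ((n : ℝ) ^ 2 : ℝ) : ℂ) =
    (2 * Real.pi * Complex.I * n * (1 / 2) + Real.pi * Complex.I * n ^ 2 * z) +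
      Real.pi * Complex.I * (n * (n - 1) : ℤ) := by
    push_cast; ring
  rw [this, Complex.exp_add, h, mul_one]

lemma t2_jac (z : ℂ) : t2 z = Complex.exp (Real.pi * Complex.I * z / 4) * jacobiTheta₂ (z / 2) z := by
  rw [t2, Th, jacobiTheta₂]
  congr 1
  apply tsum_congr
  intro n
  rw [jacobiTheta₂_term, N2]
  congr 1
  push_cast
  ring

lemma Th3_two (z : ℂ) : Th N3 (z + 2) = Th N3 z := by
  have := jacobiTheta₂_add_right 0 z
  rw [← t3_jac, ← t3_jac] at this
  exact this

lemma t3_T (z : ℂ) : t3 (z + 1) = t4 z := rfl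

lemma t4_T (z : ℂ) : t4 (z + 1) = t3 z := by
  rw [t4, t3, ← Th3_two z]
  congr 1
  ring

/-- the primitive eighth root of unity -/
def zeta8 : ℂ := Complex.exp (Real.pi * Complex.I / 4)

lemma zeta8_pow4 : zeta8 ^ 4 = -1 := by
  rw [zeta8, ← Complex.exp_nat_mul, ← Complex.exp_pi_mul_I]
  congr 1
  push_cast
  ring

lemma t2_T (z : ℂ) : t2 (z + 1) = zeta8 * t2 z := by
  have : Th N2 (z + 1) = Th N2 z := by
    rw [Th, Th]
    apply tsum_congr
    intro n
    rw [N2_eq]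
    have h := exp_pi_int (n * (n + 1)) (Int.even_mul_succ_self n)
    have : (Real.pi * Complex.I * (z + 1) * ((n * (n + 1) : ℤ) : ℝ) : ℂ) =
      Real.pi * Complex.I * z * ((n * (n + 1) : ℤ) : ℝ) +
        Real.pi * Complex.I * (n * (n + 1) : ℤ) := by
      push_cast; ring
    rw [this, Complex.exp_add, h, mul_one]
  rw [t2, t2, this, zeta8, ← mul_assoc, ← Complex.exp_add]
  congr 2
  ring

lemma t3_S (z : ℂ) (hz : 0 < z.im) : t3 (-1 / z) = hh z * t3 z := by
  rw [t3_jac, t3_jac, jacobiTheta₂_functional_equation 0 z]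
  have := hh_ne z hz
  rw [← hh]
  simp only [zero_div]
  norm_num
  field_simp

lemma t2_S (z : ℂ) (hz : 0 < z.im) : t2 (-1 / z) = hh z * t4 z := by
  have hz0 : z ≠ 0 := by rintro rfl; simp at hz
  rw [t2_jac, t4_jac, jacobiTheta₂_functional_equation (1 / 2) z]
  have := hh_ne z hz
  rw [← hh]
  have e : (-1 / z / 2 : ℂ) = -(1 / 2 / z) := by ring
  rw [e, jacobiTheta₂_neg_left]
  have e2 : (Real.pi * Complex.I * (-1 / z) / 4 : ℂ) = -Real.pi * Complex.I * (1 / 2) ^ 2 / z := by ring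
  rw [e2]
  field_simp

lemma t4_S (z : ℂ) (hz : 0 < z.im) : t4 (-1 / z) = hh z * t2 z := by
  have hz0 : z ≠ 0 := by rintro rfl; simp at hz
  rw [t2_jac, t4_jac, jacobiTheta₂_functional_equation (z / 2) z]
  have := hh_ne z hz
  rw [← hh]
  have e : (z / 2 / z : ℂ) = 1 / 2 := by field_simp
  rw [e]
  have e2 : Complex.exp (Real.pi * Complex.I * z / 4) *
      Complex.exp (-Real.pi * Complex.I * (z / 2) ^ 2 / z) = 1 := by
    rw [← Complex.exp_add, Complex.exp_eq_one_iff]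
    refine ⟨0, ?_⟩
    field_simp
    push_cast
    ring
  calc _ = hh z * (1 / hh z) * (Complex.exp (Real.pi * Complex.I * z / 4) *
      Complex.exp (-Real.pi * Complex.I * (z / 2) ^ 2 / z)) * jacobiTheta₂ (1 / 2) (-1 / z) := by
        rw [e2]; field_simp
    _ = _ := by ring

/-- the extremal polynomial -/
def Gp (a d : ℂ) : ℂ := a ^ 41 - 82 * a ^ 33 * d + 1476 * a ^ 25 * d ^ 2 - 3280 * a ^ 17 * d ^ 3

def G1 (z : ℂ) : ℂ := Gp (t3 z) (t2 z ^ 4 * t4 z ^ 4 / 16)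
def G2 (z : ℂ) : ℂ := Gp (t4 z) (-(t2 z ^ 4 * t3 z ^ 4) / 16)
def G3 (z : ℂ) : ℂ := Gp (t2 z) (-(t3 z ^ 4 * t4 z ^ 4) / 16)

lemma G1_T (z : ℂ) : G1 (z + 1) = G2 z := by
  rw [G1, G2, t3_T, t4_T, t2_T, mul_pow, zeta8_pow4]
  congr 1
  ring

lemma G2_T (z : ℂ) : G2 (z + 1) = G1 z := by
  rw [G1, G2, t3_T, t4_T, t2_T, mul_pow, zeta8_pow4]
  congr 1
  ring

lemma G3_T (z : ℂ) : G3 (z + 1) = zeta8 * G3 z := by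
  rw [G3, G3, t3_T, t4_T, t2_T]
  have h8 : zeta8 ^ 8 = 1 := by
    rw [show (8 : ℕ) = 4 * 2 from rfl, pow_mul, zeta8_pow4]; norm_num
  have h : ∀ k : ℕ, zeta8 ^ (8 * k + 1) = zeta8 := by
    intro k; rw [pow_add, pow_mul, h8]; simp
  have h41 := h 5
  have h33 := h 4
  have h25 := h 3
  have h17 := h 2
  norm_num at h41 h33 h25 h17
  simp only [Gp, mul_pow, h41, h33, h25, h17]
  ring

lemma Gp_hom (h a d : ℂ) : Gp (h * a) (h ^ 8 * d) = h ^ 41 * Gp a d := by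
  simp only [Gp]; ring

lemma G1_S (z : ℂ) (hz : 0 < z.im) : G1 (-1 / z) = hh z ^ 41 * G1 z := by
  rw [G1, G1, t3_S z hz, t4_S z hz, t2_S z hz, ← Gp_hom]
  congr 1
  ring

lemma G2_S (z : ℂ) (hz : 0 < z.im) : G2 (-1 / z) = hh z ^ 41 * G3 z := by
  rw [G2, G3, t3_S z hz, t4_S z hz, t2_S z hz, ← Gp_hom]
  congr 1
  ring

lemma G3_S (z : ℂ) (hz : 0 < z.im) : G3 (-1 / z) = hh z ^ 41 * G2 z := by
  rw [G2, G3, t3_S z hz, t4_S z hz, t2_S z hz, ← Gp_hom]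
  congr 1
  ring

lemma t3_diff : DifferentiableOn ℂ t3 {z | 0 < z.im} := fam3.diff
lemma t4_diff : DifferentiableOn ℂ t4 {z | 0 < z.im} := by
  apply DifferentiableOn.comp (t := {z : ℂ | 0 < z.im}) fam3.diff (by fun_prop)
  intro z hz
  simpa using hz
lemma t2_diff : DifferentiableOn ℂ t2 {z | 0 < z.im} := by
  apply DifferentiableOn.mul (by fun_prop) fam2.diff

lemma Gp_diff {a d : ℂ → ℂ} (ha : DifferentiableOn ℂ a {z | 0 < z.im})
    (hd : DifferentiableOn ℂ d {z | 0 < z.im}) :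
    DifferentiableOn ℂ (fun z => Gp (a z) (d z)) {z | 0 < z.im} := by
  simp only [Gp]
  fun_prop

lemma G1_diff : DifferentiableOn ℂ G1 {z | 0 < z.im} := by
  have h2 := t2_diff
  have h3 := t3_diff
  have h4 := t4_diff
  exact Gp_diff h3 (by fun_prop)
lemma G2_diff : DifferentiableOn ℂ G2 {z | 0 < z.im} := by
  have h2 := t2_diff
  have h3 := t3_diff
  have h4 := t4_diff
  exact Gp_diff h4 (by fun_prop)
lemma G3_diff : DifferentiableOn ℂ G3 {z | 0 < z.im} := by
  have h2 := t2_diff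
  have h3 := t3_diff
  have h4 := t4_diff
  exact Gp_diff h2 (by fun_prop)

/-- the nome -/
def qq (τ : UpperHalfPlane) : ℂ := Complex.exp (Real.pi * Complex.I * τ)

lemma qq_norm (τ : UpperHalfPlane) : ‖qq τ‖ = Real.exp (-Real.pi * τ.im) := by
  have := th_norm (τ : ℂ) 1
  simpa [qq] using this

lemma qq_pow_norm (k : ℕ) (τ : UpperHalfPlane) : ‖qq τ ^ k‖ = Real.exp (-Real.pi * k * τ.im) := by
  rw [norm_pow, qq_norm, ← Real.exp_nat_mul]
  congr 1
  ring

open Asymptotics UpperHalfPlane in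
/-- `f = c0 + c1 q + ... + c4 q ^ 4 + O(q ^ 5)` -/
def E5 (f : UpperHalfPlane → ℂ) (c0 c1 c2 c3 c4 : ℂ) : Prop :=
  (fun τ => f τ - (c0 + c1 * qq τ + c2 * qq τ ^ 2 + c3 * qq τ ^ 3 + c4 * qq τ ^ 4)) =O[atImInfty]
    fun τ => qq τ ^ 5

section
open Asymptotics UpperHalfPlane

lemma qq_bdd : qq =O[atImInfty] (fun _ => (1 : ℂ)) := by
  refine IsBigO.of_bound 1 (Filter.Eventually.of_forall fun τ => ?_)
  rw [qq_norm]
  simp only [norm_one, mul_one, Real.exp_le_one_iff]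
  have := mul_pos Real.pi_pos τ.im_pos
  linarith

lemma isO_mul_one {f g h : UpperHalfPlane → ℂ} (hf : f =O[atImInfty] h)
    (hg : g =O[atImInfty] (fun _ => (1 : ℂ))) : (fun τ => f τ * g τ) =O[atImInfty] h := by
  simpa using hf.mul hg

lemma one_mul_isO {f g h : UpperHalfPlane → ℂ} (hf : f =O[atImInfty] h)
    (hg : g =O[atImInfty] (fun _ => (1 : ℂ))) : (fun τ => g τ * f τ) =O[atImInfty] h := by
  simpa using hg.mul hf

lemma const_bdd (c : ℂ) : (fun _ : UpperHalfPlane => c) =O[atImInfty] (fun _ => (1 : ℂ)) :=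
  isBigO_const_const _ one_ne_zero _

lemma bdd_mul {f g : UpperHalfPlane → ℂ} (hf : f =O[atImInfty] (fun _ => (1 : ℂ)))
    (hg : g =O[atImInfty] (fun _ => (1 : ℂ))) :
    (fun τ => f τ * g τ) =O[atImInfty] (fun _ => (1 : ℂ)) := by
  simpa using hf.mul hg

lemma qq_pow_bdd (k : ℕ) : (fun τ => qq τ ^ k) =O[atImInfty] (fun _ => (1 : ℂ)) := by
  simpa using qq_bdd.pow k

lemma poly_bdd (c0 c1 c2 c3 c4 : ℂ) :
    (fun τ => c0 + c1 * qq τ + c2 * qq τ ^ 2 + c3 * qq τ ^ 3 + c4 * qq τ ^ 4) =O[atImInfty]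
      (fun _ => (1 : ℂ)) :=
  ((((const_bdd c0).add (bdd_mul (const_bdd c1) qq_bdd)).add
    (bdd_mul (const_bdd c2) (qq_pow_bdd 2))).add (bdd_mul (const_bdd c3) (qq_pow_bdd 3))).add
    (bdd_mul (const_bdd c4) (qq_pow_bdd 4))

variable {f g : UpperHalfPlane → ℂ} {a0 a1 a2 a3 a4 b0 b1 b2 b3 b4 : ℂ}

lemma E5.bdd (hf : E5 f a0 a1 a2 a3 a4) : f =O[atImInfty] (fun _ => (1 : ℂ)) := by
  have := (hf.trans (qq_pow_bdd 5)).add (poly_bdd a0 a1 a2 a3 a4)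
  simpa using this

lemma E5.mul (hf : E5 f a0 a1 a2 a3 a4) (hg : E5 g b0 b1 b2 b3 b4) :
    E5 (fun τ => f τ * g τ) (a0 * b0) (a0 * b1 + a1 * b0) (a0 * b2 + a1 * b1 + a2 * b0)
      (a0 * b3 + a1 * b2 + a2 * b1 + a3 * b0)
      (a0 * b4 + a1 * b3 + a2 * b2 + a3 * b1 + a4 * b0) := by
  have h1 := isO_mul_one hf hg.bdd
  have h2 := one_mul_isO hg (poly_bdd a0 a1 a2 a3 a4)
  have h3 : (fun τ => qq τ ^ 5 * ((a1 * b4 + a2 * b3 + a3 * b2 + a4 * b1) +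
    (a2 * b4 + a3 * b3 + a4 * b2) * qq τ + (a3 * b4 + a4 * b3) * qq τ ^ 2 + (a4 * b4) * qq τ ^ 3
      + 0 * qq τ ^ 4)) =O[atImInfty] (fun τ => qq τ ^ 5) :=
    isO_mul_one (isBigO_refl _ _) (poly_bdd _ _ _ _ _)
  refine ((h1.add h2).add h3).congr_left ?_
  intro τ
  ring

lemma E5.add (hf : E5 f a0 a1 a2 a3 a4) (hg : E5 g b0 b1 b2 b3 b4) :
    E5 (fun τ => f τ + g τ) (a0 + b0) (a1 + b1) (a2 + b2) (a3 + b3) (a4 + b4) := by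
  refine (IsBigO.add hf hg).congr_left ?_
  intro τ
  ring

lemma E5.const (c : ℂ) : E5 (fun _ => c) c 0 0 0 0 := by
  refine (isBigO_zero _ _).congr_left ?_
  intro τ
  ring

lemma E5.ofqq : E5 qq 0 1 0 0 0 := by
  refine (isBigO_zero _ _).congr_left ?_
  intro τ
  ring

lemma E5.cast (hf : E5 f a0 a1 a2 a3 a4) (hg : ∀ τ, g τ = f τ) (h0 : a0 = b0) (h1 : a1 = b1)
    (h2 : a2 = b2) (h3 : a3 = b3) (h4 : a4 = b4) : E5 g b0 b1 b2 b3 b4 := by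
  subst h0 h1 h2 h3 h4
  have : g = f := funext hg
  rwa [this]

lemma E5_of_exp {f : UpperHalfPlane → ℂ}
    (h : (fun τ => f τ - (a0 + a1 * _root_.qq τ + a2 * _root_.qq τ ^ 2 + a3 * _root_.qq τ ^ 3 + a4 * _root_.qq τ ^ 4)) =O[atImInfty]
      fun τ => Real.exp (-Real.pi * 5 * τ.im)) : E5 f a0 a1 a2 a3 a4 := by
  have e : (fun τ : UpperHalfPlane => Real.exp (-Real.pi * 5 * τ.im)) = fun τ => ‖_root_.qq τ ^ 5‖ := by
    ext τ; rw [qq_pow_norm]; norm_num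
  rw [e] at h
  exact h.of_norm_right

lemma qq_exp (τ : UpperHalfPlane) (k : ℕ) (x : ℝ) (hx : x = k) :
    Complex.exp (Real.pi * Complex.I * τ * x) = _root_.qq τ ^ k := by
  rw [_root_.qq, ← Complex.exp_nat_mul, hx]
  congr 1
  push_cast
  ring

lemma t3_E5 : E5 (fun τ => t3 τ) 1 2 0 0 2 := by
  have := fam3.tail (Finset.Icc (-2) 2) 5 (by
    intro i hi
    rw [Finset.mem_Icc, not_and_or] at hi
    have : (5 : ℤ) ≤ i ^ 2 := by
      rcases hi with hi | hi <;> nlinarith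
    rw [N3]; exact_mod_cast this)
  apply E5_of_exp
  refine this.congr_left ?_
  intro τ
  rw [show Finset.Icc (-2 : ℤ) 2 = {-2, -1, 0, 1, 2} from rfl]
  simp only [Finset.mem_insert, Finset.mem_singleton, Finset.sum_insert, Finset.sum_singleton,
    Int.reduceNeg, Int.reduceEq, or_self, not_false_eq_true, reduceCtorEq]
  rw [qq_exp τ 4 (N3 (-2)) (by norm_num [N3]), qq_exp τ 1 (N3 (-1)) (by norm_num [N3]),
    qq_exp τ 0 (N3 0) (by norm_num [N3]), qq_exp τ 1 (N3 1) (by norm_num [N3]),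
    qq_exp τ 4 (N3 2) (by norm_num [N3])]
  rw [t3]
  norm_num
  ring

lemma th2_E5 : E5 (fun τ => Th N2 τ) 2 0 2 0 0 := by
  have := fam2.tail (Finset.Icc (-2) 1) 5 (by
    intro i hi
    rw [Finset.mem_Icc, not_and_or] at hi
    have : (5 : ℤ) ≤ i * (i + 1) := by
      rcases hi with hi | hi <;> nlinarith
    rw [N2_eq]; exact_mod_cast this)
  apply E5_of_exp
  refine this.congr_left ?_
  intro τ
  rw [show Finset.Icc (-2 : ℤ) 1 = {-2, -1, 0, 1} from rfl]
  simp only [Finset.mem_insert, Finset.mem_singleton, Finset.sum_insert, Finset.sum_singleton,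
    Int.reduceNeg, Int.reduceEq, or_self, not_false_eq_true, reduceCtorEq]
  rw [qq_exp τ 2 (N2 (-2)) (by norm_num [N2]), qq_exp τ 0 (N2 (-1)) (by norm_num [N2]),
    qq_exp τ 0 (N2 0) (by norm_num [N2]), qq_exp τ 2 (N2 1) (by norm_num [N2])]
  norm_num
  ring

lemma tendsto_shift : Filter.Tendsto (fun τ : UpperHalfPlane => (1 : ℝ) +ᵥ τ) atImInfty atImInfty := by
  rw [atImInfty, Filter.tendsto_comap_iff]
  have : UpperHalfPlane.im ∘ (fun τ : UpperHalfPlane => (1 : ℝ) +ᵥ τ) = UpperHalfPlane.im := by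
    ext τ; simp
  rw [this]
  exact Filter.tendsto_comap

lemma qq_shift (τ : UpperHalfPlane) : _root_.qq ((1 : ℝ) +ᵥ τ) = -_root_.qq τ := by
  rw [_root_.qq, _root_.qq, coe_vadd, mul_add, Complex.exp_add]
  simp

lemma t4_E5 : E5 (fun τ => t4 τ) 1 (-2) 0 0 2 := by
  have h : E5 _ _ _ _ _ _ := t3_E5
  have := h.comp_tendsto tendsto_shift
  have h2 : (fun τ => ((fun τ => _root_.qq τ ^ 5) ∘ fun τ : UpperHalfPlane => (1 : ℝ) +ᵥ τ) τ) =O[atImInfty]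
      fun τ => _root_.qq τ ^ 5 := by
    refine (isBigO_refl _ _).neg_left.congr_left (f₁ := fun τ => -_root_.qq τ ^ 5) ?_ 
    intro τ
    simp only [Function.comp, qq_shift]
    ring
  refine (this.trans h2).congr_left ?_
  intro τ
  simp only [Function.comp, qq_shift, coe_vadd]
  rw [t3, t4, add_comm (τ : ℂ) 1]
  push_cast
  ring

lemma E5.sq (hf : E5 f a0 a1 a2 a3 a4) : E5 (fun τ => f τ ^ 2) (a0 * a0) (2 * a0 * a1)
    (2 * a0 * a2 + a1 ^ 2) (2 * a0 * a3 + 2 * a1 * a2) (2 * a0 * a4 + 2 * a1 * a3 + a2 ^ 2) := by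
  refine (hf.mul hf).cast (fun τ => by ring) ?_ ?_ ?_ ?_ ?_ <;> ring

lemma t3_2_E5 : E5 (fun τ => t3 τ ^ 2) 1 4 4 0 4 := by
  refine (t3_E5.mul t3_E5).cast (fun τ => by ring) ?_ ?_ ?_ ?_ ?_ <;> norm_num

lemma t3_4_E5 : E5 (fun τ => t3 τ ^ 4) 1 8 24 32 24 := by
  refine (t3_2_E5.mul t3_2_E5).cast (fun τ => by ring) ?_ ?_ ?_ ?_ ?_ <;> norm_num

lemma t3_8_E5 : E5 (fun τ => t3 τ ^ 8) 1 16 112 448 1136 := by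
  refine (t3_4_E5.mul t3_4_E5).cast (fun τ => by ring) ?_ ?_ ?_ ?_ ?_ <;> norm_num

lemma t3_16_E5 : E5 (fun τ => t3 τ ^ 16) 1 32 480 4480 29152 := by
  refine (t3_8_E5.mul t3_8_E5).cast (fun τ => by ring) ?_ ?_ ?_ ?_ ?_ <;> norm_num

lemma t3_32_E5 : E5 (fun τ => t3 τ ^ 32) 1 64 1984 39680 575424 := by
  refine (t3_16_E5.mul t3_16_E5).cast (fun τ => by ring) ?_ ?_ ?_ ?_ ?_ <;> norm_num

lemma t3_17_E5 : E5 (fun τ => t3 τ ^ 17) 1 34 544 5440 38114 := by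
  refine (t3_16_E5.mul t3_E5).cast (fun τ => by ring) ?_ ?_ ?_ ?_ ?_ <;> norm_num

lemma t3_9_E5 : E5 (fun τ => t3 τ ^ 9) 1 18 144 672 2034 := by
  refine (t3_8_E5.mul t3_E5).cast (fun τ => by ring) ?_ ?_ ?_ ?_ ?_ <;> norm_num

lemma t3_33_E5 : E5 (fun τ => t3 τ ^ 33) 1 66 2112 43648 654786 := by
  refine (t3_32_E5.mul t3_E5).cast (fun τ => by ring) ?_ ?_ ?_ ?_ ?_ <;> norm_num

lemma t3_25_E5 : E5 (fun τ => t3 τ ^ 25) 1 50 1200 18400 202450 := by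
  refine (t3_16_E5.mul t3_9_E5).cast (fun τ => by ring) ?_ ?_ ?_ ?_ ?_ <;> norm_num

lemma t3_41_E5 : E5 (fun τ => t3 τ ^ 41) 1 82 3280 85280 1620402 := by
  refine (t3_32_E5.mul t3_9_E5).cast (fun τ => by ring) ?_ ?_ ?_ ?_ ?_ <;> norm_num

lemma t4_2_E5 : E5 (fun τ => t4 τ ^ 2) 1 (-4) 4 0 4 := by
  refine (t4_E5.mul t4_E5).cast (fun τ => by ring) ?_ ?_ ?_ ?_ ?_ <;> norm_num

lemma t4_4_E5 : E5 (fun τ => t4 τ ^ 4) 1 (-8) 24 (-32) 24 := by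
  refine (t4_2_E5.mul t4_2_E5).cast (fun τ => by ring) ?_ ?_ ?_ ?_ ?_ <;> norm_num

lemma th2_2_E5 : E5 (fun τ => Th N2 τ ^ 2) 4 0 8 0 4 := by
  refine (th2_E5.mul th2_E5).cast (fun τ => by ring) ?_ ?_ ?_ ?_ ?_ <;> norm_num

lemma th2_4_E5 : E5 (fun τ => Th N2 τ ^ 4) 16 0 64 0 96 := by
  refine (th2_2_E5.mul th2_2_E5).cast (fun τ => by ring) ?_ ?_ ?_ ?_ ?_ <;> norm_num

lemma t2_pow4 (τ : UpperHalfPlane) : t2 τ ^ 4 = _root_.qq τ * Th N2 τ ^ 4 := by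
  rw [t2, mul_pow, ← Complex.exp_nat_mul, _root_.qq]
  congr 2
  push_cast
  ring

lemma t2_4_E5 : E5 (fun τ => t2 τ ^ 4) 0 16 0 64 0 := by
  refine (E5.ofqq.mul th2_4_E5).cast (fun τ => t2_pow4 τ) ?_ ?_ ?_ ?_ ?_ <;> norm_num

lemma dd_E5 : E5 (fun τ => t2 τ ^ 4 * t4 τ ^ 4 / 16) 0 1 (-8) 28 (-64) := by
  refine ((t2_4_E5.mul t4_4_E5).mul (E5.const (1 / 16))).cast (fun τ => by ring) ?_ ?_ ?_ ?_ ?_ <;> norm_num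

lemma dd2_E5 : E5 (fun τ => (t2 τ ^ 4 * t4 τ ^ 4 / 16) ^ 2) 0 0 1 (-16) 120 := by
  refine (dd_E5.mul dd_E5).cast (fun τ => by ring) ?_ ?_ ?_ ?_ ?_ <;> norm_num

lemma dd3_E5 : E5 (fun τ => (t2 τ ^ 4 * t4 τ ^ 4 / 16) ^ 3) 0 0 0 1 (-24) := by
  refine (dd2_E5.mul dd_E5).cast (fun τ => by ring) ?_ ?_ ?_ ?_ ?_ <;> norm_num

lemma G1_E5 : E5 (fun τ => G1 τ) 1 0 0 0 15170 := by
  refine (((t3_41_E5.add ((E5.const (-82)).mul (t3_33_E5.mul dd_E5))).add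
    ((E5.const 1476).mul (t3_25_E5.mul dd2_E5))).add
    ((E5.const (-3280)).mul (t3_17_E5.mul dd3_E5))).cast
    (fun τ => by simp only [G1, Gp]; ring) ?_ ?_ ?_ ?_ ?_ <;> norm_num

end

section
open Asymptotics UpperHalfPlane

/-- `f = c + O(q)` -/
def E1 (f : UpperHalfPlane → ℂ) (c : ℂ) : Prop := (fun τ => f τ - c) =O[atImInfty] qq

variable {f g : UpperHalfPlane → ℂ} {a b : ℂ}

lemma E5.toE1 {c0 c1 c2 c3 c4 : ℂ} (h : E5 f c0 c1 c2 c3 c4) : E1 f c0 := by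
  have h1 : (fun τ => qq τ * qq τ ^ 4) =O[atImInfty] qq :=
    isO_mul_one (isBigO_refl _ _) (qq_pow_bdd 4)
  have h1' : (fun τ => qq τ ^ 5) =O[atImInfty] qq := h1.congr_left (fun τ => by ring)
  have h2 : (fun τ => qq τ * (c1 + c2 * qq τ + c3 * qq τ ^ 2 + c4 * qq τ ^ 3 + 0 * qq τ ^ 4))
    =O[atImInfty] qq := isO_mul_one (isBigO_refl _ _) (poly_bdd _ _ _ _ _)
  refine ((IsBigO.trans h h1').add h2).congr_left (fun τ => by ring)

lemma E1.bdd (h : E1 f a) : f =O[atImInfty] (fun _ => (1 : ℂ)) := by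
  simpa using (IsBigO.trans h qq_bdd).add (const_bdd a)

lemma E1.mul (hf : E1 f a) (hg : E1 g b) : E1 (fun τ => f τ * g τ) (a * b) := by
  have h1 := isO_mul_one hf hg.bdd
  have h2 := one_mul_isO hg (const_bdd a)
  exact (h1.add h2).congr_left (fun τ => by ring)

lemma E1.add (hf : E1 f a) (hg : E1 g b) : E1 (fun τ => f τ + g τ) (a + b) :=
  (IsBigO.add hf hg).congr_left (fun τ => by ring)

lemma E1.const (c : ℂ) : E1 (fun _ => c) c :=
  (isBigO_zero _ _).congr_left (fun τ => by ring)

lemma E1.ofqq : E1 qq 0 :=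
  (isBigO_refl _ _).congr_left (fun τ => by ring)

lemma E1.pow (hf : E1 f a) (k : ℕ) : E1 (fun τ => f τ ^ k) (a ^ k) := by
  induction k with
  | zero => simpa using E1.const 1
  | succ k ih => simpa [pow_succ] using ih.mul hf

/-- the cofactor in `G3` -/
def HH (τ : UpperHalfPlane) : ℂ :=
  Th N2 τ ^ 41 * _root_.qq τ ^ 6
  + (-82) * Th N2 τ ^ 33 * _root_.qq τ ^ 4 * ((-1 / 16) * t3 τ ^ 4 * t4 τ ^ 4)
  + 1476 * Th N2 τ ^ 25 * _root_.qq τ ^ 2 * ((-1 / 16) * t3 τ ^ 4 * t4 τ ^ 4) ^ 2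
  + (-3280) * Th N2 τ ^ 17 * ((-1 / 16) * t3 τ ^ 4 * t4 τ ^ 4) ^ 3

lemma HH_E1 : E1 HH 104960 := by
  have h2 := th2_E5.toE1
  have h3 := t3_E5.toE1
  have h4 := t4_E5.toE1
  have hd := ((E1.const (-1 / 16)).mul (h3.pow 4)).mul (h4.pow 4)
  have := ((((h2.pow 41).mul (E1.ofqq.pow 6)).add
    ((((E1.const (-82)).mul (h2.pow 33)).mul (E1.ofqq.pow 4)).mul hd)).add
    ((((E1.const 1476).mul (h2.pow 25)).mul (E1.ofqq.pow 2)).mul (hd.pow 2))).add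
    (((E1.const (-3280)).mul (h2.pow 17)).mul (hd.pow 3))
  norm_num at this
  refine IsBigO.congr_left this (fun τ => ?_)
  simp only [HH]
  norm_num

lemma G3_eq (τ : UpperHalfPlane) :
    G3 τ = Complex.exp (Real.pi * Complex.I * τ * (17 / 4 : ℝ)) * HH τ := by
  set e := Complex.exp (Real.pi * Complex.I * τ / 4) with he
  have h1 : Complex.exp (Real.pi * Complex.I * τ * (17 / 4 : ℝ)) = e ^ 17 := by
    rw [he, ← Complex.exp_nat_mul]; congr 1; push_cast; ring
  have h2 : _root_.qq τ = e ^ 4 := by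
    rw [he, ← Complex.exp_nat_mul, _root_.qq]; congr 1; push_cast; ring
  have h3 : t2 τ = e * Th N2 τ := rfl
  rw [h1, G3, Gp, HH, h2, h3]
  ring

lemma exp_isO (r : ℝ) : (fun τ : UpperHalfPlane => Complex.exp (Real.pi * Complex.I * τ * r))
    =O[atImInfty] fun τ => Real.exp (-Real.pi * r * τ.im) := by
  refine IsBigO.of_bound 1 (Filter.Eventually.of_forall fun τ => ?_)
  rw [th_norm, Real.norm_of_nonneg (Real.exp_pos _).le, one_mul]
  apply le_of_eq
  congr 1
  rw [coe_im]
  ring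

lemma G3_O : (fun τ : UpperHalfPlane => G3 τ) =O[atImInfty]
    fun τ => Real.exp (-Real.pi * (17 / 4) * τ.im) := by
  have := (exp_isO (17 / 4)).mul HH_E1.bdd.norm_right
  refine (this.congr_left (fun τ => (G3_eq τ).symm)).congr_right (fun τ => ?_)
  simp

lemma G3_lead : (fun τ : UpperHalfPlane => G3 τ -
    104960 * Complex.exp (Real.pi * Complex.I * τ * (17 / 4 : ℝ))) =O[atImInfty]
    fun τ => Real.exp (-Real.pi * (21 / 4) * τ.im) := by
  have := (exp_isO (17 / 4)).mul (IsBigO.norm_right HH_E1)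
  refine (this.congr_left (fun τ => ?_)).congr_right (fun τ => ?_)
  · rw [G3_eq]; ring
  · rw [qq_norm, ← Real.exp_add]
    congr 1; ring

lemma exp_mono_isO {r s : ℝ} (h : r ≤ s) : (fun τ : UpperHalfPlane => Real.exp (-Real.pi * s * τ.im))
    =O[atImInfty] fun τ => Real.exp (-Real.pi * r * τ.im) := by
  refine IsBigO.of_bound 1 (Filter.Eventually.of_forall fun τ => ?_)
  rw [Real.norm_of_nonneg (Real.exp_pos _).le, Real.norm_of_nonneg (Real.exp_pos _).le, one_mul]
  apply Real.exp_le_exp.mpr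
  have := mul_le_mul_of_nonneg_left (mul_le_mul_of_nonneg_right h τ.im_pos.le) Real.pi_pos.le
  linarith

lemma coef_zero (c : ℂ) (r s : ℝ) (h : r < s)
    (hc : (fun τ : UpperHalfPlane => c * Complex.exp (Real.pi * Complex.I * τ * r))
      =O[atImInfty] fun τ => Real.exp (-Real.pi * s * τ.im)) : c = 0 := by
  have h1 : (fun τ : UpperHalfPlane => c) =O[atImInfty]
      fun τ => Real.exp (-Real.pi * (s - r) * τ.im) := by
    have := hc.mul (exp_isO (-r))
    refine (this.congr_left (fun τ => ?_)).congr_right (fun τ => ?_)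
    · rw [mul_assoc, ← Complex.exp_add]
      push_cast
      ring_nf
      simp
    · rw [← Real.exp_add]; congr 1; ring
  have h2 : Filter.Tendsto (fun τ : UpperHalfPlane => Real.exp (-Real.pi * (s - r) * τ.im))
      atImInfty (nhds 0) := by
    apply Real.tendsto_exp_atBot.comp
    have : Filter.Tendsto UpperHalfPlane.im atImInfty Filter.atTop := Filter.tendsto_comap
    refine this.const_mul_atTop_of_neg ?_
    have := mul_pos Real.pi_pos (sub_pos.mpr h)
    linarith
  have h3 := h1.trans_tendsto h2
  have : (atImInfty : Filter UpperHalfPlane).NeBot := inferInstance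
  exact tendsto_nhds_unique tendsto_const_nhds h3
end

section
open MeasureTheory Set UnitAddTorus

variable {d : Type*} [Fintype d]

/-- inclusion of integer vectors -/
def ivec (n : d → ℤ) : d → ℝ := fun i => (n i : ℝ)

/-- the additive character attached to an integer vector -/
def echar (n : d → ℤ) (x : d → ℝ) : ℂ :=
  Complex.exp (2 * Real.pi * Complex.I * ∑ i, (n i : ℂ) * (x i : ℂ))

lemma mFourier_coe (n : d → ℤ) (x : d → ℝ) :
    mFourier n (fun i => (x i : UnitAddCircle)) = echar n x := by
  simp only [mFourier, ContinuousMap.coe_mk, fourier_coe_apply, echar]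
  rw [← Complex.exp_sum, Finset.mul_sum]
  congr 1
  apply Finset.sum_congr rfl
  intro i _
  push_cast
  ring

lemma echar_norm (n : d → ℤ) (x : d → ℝ) : ‖echar n x‖ = 1 := by
  have : (2 * Real.pi * Complex.I * ∑ i, (n i : ℂ) * (x i : ℂ)) =
    ((2 * Real.pi * ∑ i, (n i : ℝ) * x i : ℝ) : ℂ) * Complex.I := by
    push_cast; ring
  rw [echar, this, Complex.norm_exp_ofReal_mul_I]

lemma echar_add (n m : d → ℤ) (x : d → ℝ) : echar n (x + ivec m) = echar n x := by
  rw [echar, echar, Complex.exp_eq_exp_iff_exists_int]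
  refine ⟨∑ i, n i * m i, ?_⟩
  simp only [ivec, Pi.add_apply]
  push_cast
  simp only [mul_add, Finset.sum_add_distrib]
  ring

lemma echar_cont (n : d → ℤ) : Continuous (echar n) := by
  unfold echar; fun_prop

/-- unit cells -/
def cell (n : d → ℤ) : Set (d → ℝ) := {x | ∀ i, x i ∈ Ioc (n i : ℝ) (n i + 1)}

lemma cell_meas (n : d → ℤ) : MeasurableSet (cell n) := by
  have : cell n = Set.pi univ (fun i => Ioc (n i : ℝ) (n i + 1)) := by
    ext x; simp [cell]
  rw [this]
  exact MeasurableSet.univ_pi (fun i => measurableSet_Ioc)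

lemma cell_vol (n : d → ℤ) : volume (cell n) = 1 := by
  have : cell n = Set.pi univ (fun i => Ioc (n i : ℝ) (n i + 1)) := by
    ext x; simp [cell]
  rw [this, Real.volume_pi_Ioc]
  simp

lemma cell_disj : Pairwise (Function.onFun Disjoint (cell (d := d))) := by
  intro n m hnm
  rw [Function.onFun, Set.disjoint_left]
  intro x hn hm
  apply hnm
  ext i
  have h1 := hn i
  have h2 := hm i
  have e1 : ⌈x i⌉ = n i + 1 := by
    rw [Int.ceil_eq_iff]; push_cast; exact ⟨by linarith [h1.1], h1.2⟩
  have e2 : ⌈x i⌉ = m i + 1 := by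
    rw [Int.ceil_eq_iff]; push_cast; exact ⟨by linarith [h2.1], h2.2⟩
  omega

lemma cell_union : (⋃ n, cell (d := d) n) = univ := by
  rw [eq_univ_iff_forall]
  intro x
  rw [mem_iUnion]
  refine ⟨fun i => ⌈x i⌉ - 1, fun i => ?_⟩
  push_cast
  exact ⟨by linarith [Int.ceil_lt_add_one (x i)], by linarith [Int.le_ceil (x i)]⟩

lemma unfold_integral (f : (d → ℝ) → ℂ) (hf : Integrable f) :
    HasSum (fun n => ∫ x in cell (0 : d → ℤ), f (x + ivec n)) (∫ x, f x) := by
  have := hasSum_integral_iUnion (μ := volume) (f := f) cell_meas cell_disj (by rw [cell_union]; exact hf.integrableOn)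
  rw [cell_union, Measure.restrict_univ] at this
  convert! this using 2 with n
  have h := (measurePreserving_add_right (volume : Measure (d → ℝ)) (ivec n)).setIntegral_preimage_emb
    (measurableEmbedding_addRight _) f (cell n)
  rw [← h]
  congr 2
  ext x
  simp only [cell, ivec, mem_preimage, Set.mem_ofPred_eq, Pi.add_apply, Pi.zero_apply, mem_Ioc]
  apply forall_congr'
  intro i
  push_cast
  constructor <;> rintro ⟨h1, h2⟩ <;> constructor <;> linarith

/-- Poisson summation on `ℤ ^ d`. -/
lemma poisson_pi (g : (d → ℝ) → ℂ) (hg : Continuous g) (hgInt : Integrable g)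
    (hb : ∀ R : ℝ, ∃ M : (d → ℤ) → ℝ, Summable M ∧ ∀ n x, ‖x‖ ≤ R → ‖g (x + ivec n)‖ ≤ M n)
    (c : (d → ℤ) → ℂ) (hc : ∀ n, c n = ∫ x, echar (-n) x * g x) (hs : Summable c) (x : d → ℝ) :
    ∑' n, g (x + ivec n) = ∑' n, c n * echar n x := by
  classical
  set F : (d → ℝ) → ℂ := fun x => ∑' n, g (x + ivec n) with hF
  have hFc : Continuous F := by
    rw [continuous_iff_continuousAt]
    intro x
    obtain ⟨M, hM, hM'⟩ := hb (‖x‖ + 1)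
    have : ContinuousOn F (Metric.ball 0 (‖x‖ + 1)) := by
      apply continuousOn_tsum (u := M) _ hM
      · intro n y hy
        apply hM' n y
        rw [mem_ball_zero_iff] at hy
        exact hy.le
      · intro n
        apply Continuous.continuousOn
        fun_prop
    exact this.continuousAt (Metric.isOpen_ball.mem_nhds (by simp))
  have hFp : ∀ x m, F (x + ivec m) = F x := by
    intro x m
    simp only [hF]
    rw [← (Equiv.addLeft m).tsum_eq (fun n => g (x + ivec n))]
    apply tsum_congr
    intro n
    congr 1
    ext i
    simp [ivec]
    ring
  -- descend to the torus
  set pr : (d → ℝ) → UnitAddTorus d := Pi.map (fun _ (y : ℝ) => (y : UnitAddCircle)) with hpr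
  have hq : IsOpenQuotientMap pr := IsOpenQuotientMap.piMap (fun _ => QuotientAddGroup.isOpenQuotientMap_mk)
  obtain ⟨s, hs'⟩ := hq.surjective.hasRightInverse
  have hFs : ∀ x, F (s (pr x)) = F x := by
    intro x
    have h1 := hs' (pr x)
    have h2 : ∀ i, ∃ m : ℤ, s (pr x) i = x i + m := by
      intro i
      have := congrFun h1 i
      simp only [hpr, Pi.map_apply] at this
      rw [QuotientAddGroup.eq_iff_sub_mem, AddSubgroup.mem_zmultiples_iff] at this
      obtain ⟨k, hk⟩ := this
      refine ⟨k, ?_⟩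
      simp only [zsmul_eq_mul, mul_one] at hk
      rw [hk]
      ring
    choose m hm using h2
    have : s (pr x) = x + ivec m := by ext i; rw [hm i]; rfl
    rw [this, hFp]
  let F' : C(UnitAddTorus d, ℂ) := ⟨fun t => F (s t), by
    rw [hq.isQuotientMap.continuous_iff]
    convert! hFc using 1
    ext x
    exact hFs x⟩
  have hcoef : ∀ n, mFourierCoeff F' n = c n := by
    intro n
    rw [mFourierCoeff_eq_integral F' n 0, hc n]
    have hset : {x : d → ℝ | ∀ i, x i ∈ Ioc ((0 : d → ℝ) i) ((0 : d → ℝ) i + 1)} = cell (0 : d → ℤ) := by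
      ext x; simp [cell]
    rw [hset]
    have h1 : HasSum _ _ := unfold_integral (fun x => echar (-n) x * g x) (by
      refine hgInt.bdd_mul (c := 1) (echar_cont _).aestronglyMeasurable ?_
      exact Filter.Eventually.of_forall (fun x => (echar_norm _ _).le))
    rw [← h1.tsum_eq]
    obtain ⟨M, hM, hM'⟩ := hb 1
    have hMn : ∀ m, ∀ᵐ a ∂(volume.restrict (cell (0 : d → ℤ))), ‖echar (-n) (a + ivec m) * g (a + ivec m)‖ ≤ M m := by
      intro m
      refine (ae_restrict_iff' (cell_meas _)).mpr (Filter.Eventually.of_forall fun x hx => ?_)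
      rw [norm_mul, echar_norm, one_mul]
      apply hM'
      rw [pi_norm_le_iff_of_nonneg zero_le_one]
      intro i
      have := hx i
      simp only [Pi.zero_apply, Int.cast_zero, zero_add, mem_Ioc] at this
      rw [Real.norm_of_nonneg this.1.le]
      exact this.2
    have hfin : IsFiniteMeasure (volume.restrict (cell (0 : d → ℤ))) := ⟨by
      rw [Measure.restrict_apply_univ, cell_vol]; exact ENNReal.one_lt_top⟩
    have h2 := hasSum_integral_of_dominated_convergence (μ := volume.restrict (cell (0 : d → ℤ)))
      (F := fun m (a : d → ℝ) => echar (-n) (a + ivec m) * g (a + ivec m))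
      (f := fun a => mFourier (-n) (fun i => a i) • F' (fun i => a i))
      (fun m _ => M m) ?_ hMn ?_ ?_ ?_
    · exact h2.tsum_eq.symm
    · intro m
      apply Continuous.aestronglyMeasurable
      have := echar_cont (-n)
      fun_prop
    · exact Filter.Eventually.of_forall fun _ => hM
    · exact integrable_const _
    · refine (ae_restrict_iff' (cell_meas _)).mpr (Filter.Eventually.of_forall fun x hx => ?_)
      have e1 : F' (fun i => (x i : UnitAddCircle)) = F x := hFs x
      rw [mFourier_coe, e1]
      simp only [echar_add, smul_eq_mul]
      apply HasSum.mul_left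
      obtain ⟨M, hM, hM'⟩ := hb ‖x‖
      exact (Summable.of_norm_bounded hM (fun m => hM' m x le_rfl)).hasSum
  have hfs : mFourierCoeff F' = c := funext hcoef
  have := hasSum_mFourier_series_apply_of_summable (f := F') (by rw [hfs]; exact hs) (pr x)
  have e1 : F' (pr x) = F x := hFs x
  rw [e1] at this
  rw [show (∑' n, g (x + ivec n)) = F x from rfl, ← this.tsum_eq]
  apply tsum_congr
  intro n
  rw [hcoef, smul_eq_mul]
  congr 1
  exact mFourier_coe n x
end

section
open MeasureTheory Set

variable {n : ℕ} (b : Module.Basis (Fin n) ℝ (EuclideanSpace ℝ (Fin n)))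

/-- the linear parametrization attached to a basis -/
def AA : (Fin n → ℝ) ≃L[ℝ] EuclideanSpace ℝ (Fin n) := b.equivFun.symm.toContinuousLinearEquiv

/-- lattice vector with given integer coordinates -/
def vec (m : Fin n → ℤ) : EuclideanSpace ℝ (Fin n) := AA b (ivec m)

lemma AA_apply (x : Fin n → ℝ) : AA b x = ∑ i, x i • b i := by
  simp [AA, Module.Basis.equivFun_symm_apply]

lemma vec_eq (m : Fin n → ℤ) : vec b m = ∑ i, (m i) • b i := by
  rw [vec, AA_apply]
  apply Finset.sum_congr rfl
  intro i _
  rw [ivec, Int.cast_smul_eq_zsmul]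

lemma vec_inj : Function.Injective (vec b) := by
  intro m m' h
  have := (AA b).injective h
  ext i
  have := congrFun this i
  simpa [ivec] using this

lemma exp_le_pow (k : ℕ) (s y : ℝ) (hs : 0 < s) (hy : 0 < y) :
    Real.exp (-(s * y ^ 2)) ≤ (k.factorial / s ^ k) * (y⁻¹ ^ (2 * k)) := by
  have h := Real.pow_div_factorial_le_exp (s * y ^ 2) (by positivity) k
  rw [Real.exp_neg]
  have h1 : (s * y ^ 2) ^ k / k.factorial > 0 := by positivity
  calc (Real.exp (s * y ^ 2))⁻¹ ≤ ((s * y ^ 2) ^ k / k.factorial)⁻¹ := inv_anti₀ h1 h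
    _ = _ := by
      rw [inv_div, mul_pow, inv_pow, ← pow_mul]
      field_simp

lemma vec_summable (s : ℝ) (hs : 0 < s) :
    Summable fun m : Fin n → ℤ => Real.exp (-(s * ‖vec b m‖ ^ 2)) := by
  set L := Submodule.span ℤ (range b)
  have hmem : ∀ m, vec b m ∈ L := by
    intro m
    rw [vec_eq]
    exact Submodule.sum_mem _ (fun i _ => Submodule.smul_mem _ _ (Submodule.subset_span ⟨i, rfl⟩))
  set k := Module.finrank ℤ L + 1
  have h1 := ZLattice.summable_norm_pow_inv L (2 * k) (by omega)
  have h2 : Summable fun m : Fin n → ℤ => ‖vec b m‖⁻¹ ^ (2 * k) := by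
    have := h1.comp_injective (i := fun m => (⟨vec b m, hmem m⟩ : L)) (by
      intro m m' h
      exact vec_inj b (congrArg Subtype.val h))
    exact this
  refine Summable.of_norm_bounded_eventually (h2.mul_left (k.factorial / s ^ k)) ?_
  have : ({0}ᶜ : Set (Fin n → ℤ)) ∈ Filter.cofinite := by simp
  filter_upwards [this] with m hm
  rw [Real.norm_of_nonneg (Real.exp_pos _).le]
  apply exp_le_pow _ _ _ hs
  rw [norm_pos_iff]
  intro h0
  apply hm
  apply vec_inj b
  rw [h0, vec]
  have : ivec (0 : Fin n → ℤ) = 0 := by ext i; simp [ivec]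
  rw [this, map_zero]

lemma sq_norm_lower (v w : EuclideanSpace ℝ (Fin n)) : ‖v‖ ^ 2 / 2 - ‖w‖ ^ 2 ≤ ‖w + v‖ ^ 2 := by
  have h : ‖v‖ ≤ ‖w + v‖ + ‖w‖ := by
    have := norm_sub_le (w + v) w
    simpa using this
  have h1 := norm_nonneg v
  have h2 := norm_nonneg w
  have h3 := norm_nonneg (w + v)
  nlinarith [sq_nonneg (‖w + v‖ - ‖w‖)]

lemma shift_bound (t R : ℝ) (ht : 0 < t) (w : EuclideanSpace ℝ (Fin n)) (hw : ‖w‖ ≤ R)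
    (m : Fin n → ℤ) : Real.exp (-Real.pi * t * ‖w + vec b m‖ ^ 2) ≤
      Real.exp (Real.pi * t * R ^ 2) * Real.exp (-(Real.pi * t / 2 * ‖vec b m‖ ^ 2)) := by
  rw [← Real.exp_add]
  apply Real.exp_le_exp.mpr
  have h := sq_norm_lower (vec b m) w
  have h2 : ‖w‖ ^ 2 ≤ R ^ 2 := by gcongr
  have := mul_le_mul_of_nonneg_left (h.trans' (sub_le_sub_left h2 _)) (mul_pos Real.pi_pos ht).le
  linarith

lemma famL (u : EuclideanSpace ℝ (Fin n)) : ThetaFam (fun m => ‖u + vec b m‖ ^ 2) where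
  nonneg m := by positivity
  summ t ht := by
    refine Summable.of_nonneg_of_le (fun m => (Real.exp_pos _).le)
      (fun m => shift_bound b t ‖u‖ ht u le_rfl m) ?_
    exact (vec_summable b _ (by have := Real.pi_pos; positivity)).mul_left _

lemma gauss_integral (z : ℂ) (hz : 0 < z.im) (y : EuclideanSpace ℝ (Fin n)) :
    ∫ v : EuclideanSpace ℝ (Fin n), Complex.exp (-(2 * Real.pi * Complex.I * (⟪y, v⟫ : ℝ))) *
      Complex.exp (Real.pi * Complex.I * z * (‖v‖ ^ 2 : ℝ)) =
      (hh z ^ n)⁻¹ * Complex.exp (Real.pi * Complex.I * (-1 / z) * (‖y‖ ^ 2 : ℝ)) := by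
  have hz0 : z ≠ 0 := by rintro rfl; simp at hz
  have hre : 0 < (-(Real.pi * Complex.I * z) : ℂ).re := by
    simp
    exact mul_pos Real.pi_pos hz
  have hpi : (Real.pi : ℂ) ≠ 0 := Complex.ofReal_ne_zero.mpr Real.pi_ne_zero
  have := GaussianFourier.integral_cexp_neg_mul_sq_norm_add hre (-(2 * Real.pi * Complex.I)) y
  rw [finrank_euclideanSpace_fin] at this
  convert! this using 1
  · congr 1
    ext v
    rw [← Complex.exp_add]
    congr 1
    push_cast
    ring
  · congr 1
    · have e : (Real.pi / -(Real.pi * Complex.I * z) : ℂ) = (-Complex.I * z)⁻¹ := by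
        field_simp
      rw [e, Complex.inv_cpow, hh, ← Complex.cpow_nat_mul]
      · congr 2
        ring
      · intro h
        have h2 := Complex.arg_eq_pi_iff.mp h
        simp at h2
        linarith [h2.1]
    · congr 1
      push_cast
      field_simp
      ring

lemma theta_poisson (σ : (Fin n → ℤ) ≃ (Fin n → ℤ))
    (hσ : ∀ m i, ⟪vec b (σ m), b i⟫ = (m i : ℝ)) :
    ∃ κ : ℂ, ∀ z : ℂ, 0 < z.im → ∀ u : EuclideanSpace ℝ (Fin n),
      Th (fun m => ‖u + vec b m‖ ^ 2) z = κ * (hh z ^ n)⁻¹ *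
        ∑' m, Complex.exp (Real.pi * Complex.I * (-1 / z) * (‖vec b m‖ ^ 2 : ℝ)) *
          Complex.exp (2 * Real.pi * Complex.I * (⟪vec b m, u⟫ : ℝ)) := by
  set A := AA b with hA
  set Am := A.toHomeomorph.toMeasurableEquiv with hAm
  have hmap : (Measure.map A volume).IsAddHaarMeasure := A.isAddHaarMeasure_map _
  obtain ⟨c0, hc0⟩ : ∃ c0 : NNReal, Measure.map A volume = c0 • (volume : Measure (EuclideanSpace ℝ (Fin n))) :=
    ⟨_, Measure.isAddLeftInvariant_eq_smul _ _⟩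
  have hechar : ∀ m (x : Fin n → ℝ), ∑ i, (m i : ℂ) * (x i : ℂ) = ((⟪vec b (σ m), A x⟫ : ℝ) : ℂ) := by
    intro m x
    rw [hA, AA_apply, inner_sum]
    push_cast
    apply Finset.sum_congr rfl
    intro i _
    rw [real_inner_smul_right, hσ]
    push_cast
    ring
  refine ⟨(c0 : ℝ), fun z hz u => ?_⟩
  set G : EuclideanSpace ℝ (Fin n) → ℂ := fun v => Complex.exp (Real.pi * Complex.I * z * (‖v‖ ^ 2 : ℝ)) with hG
  have hGi : Integrable G := by
    have hre : 0 < (-(Real.pi * Complex.I * z) : ℂ).re := by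
      simp
      exact mul_pos Real.pi_pos hz
    have := GaussianFourier.integrable_cexp_neg_mul_sq_norm_add hre 0 (0 : EuclideanSpace ℝ (Fin n))
    refine this.congr (Filter.Eventually.of_forall fun v => ?_)
    simp [hG]
  have hgInt : Integrable (fun x => G (A x)) := by
    have h1 : Integrable G (Measure.map Am volume) := by
      have : Measure.map Am volume = Measure.map A volume := rfl
      rw [this, hc0]
      exact hGi.smul_measure_nnreal
    exact (integrable_map_equiv Am G).mp h1
  have hcomp : ∀ f : EuclideanSpace ℝ (Fin n) → ℂ, ∫ x, f (A x) = (c0 : ℝ) * ∫ v, f v := by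
    intro f
    have h1 : ∫ v, f v ∂(Measure.map Am volume) = ∫ x, f (A x) := integral_map_equiv Am f
    rw [← h1]
    have : Measure.map Am volume = Measure.map A volume := rfl
    rw [this, hc0, integral_smul_nnreal_measure]
    rfl
  have hw : 0 < (-1 / z : ℂ).im := by
    rw [neg_div, one_div, Complex.neg_im, Complex.inv_im, neg_div, neg_neg]
    have hz0 : z ≠ 0 := by rintro rfl; simp at hz
    exact div_pos hz (Complex.normSq_pos.mpr hz0)
  have hF0 := (famL b 0).summable hw
  simp only [zero_add] at hF0
  have hmain := poisson_pi (d := Fin n) (fun x => G (A x)) (by fun_prop) hgInt ?_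
    (fun m => (c0 : ℝ) * ((hh z ^ n)⁻¹ *
      Complex.exp (Real.pi * Complex.I * (-1 / z) * (‖vec b (σ m)‖ ^ 2 : ℝ)))) ?_ ?_ (A.symm u)
  · have e1 : ∀ m, G (A (A.symm u + ivec m)) =
        Complex.exp (Real.pi * Complex.I * z * (‖u + vec b m‖ ^ 2 : ℝ)) := by
      intro m
      rw [map_add, A.apply_symm_apply]
      rfl
    rw [tsum_congr e1] at hmain
    rw [Th, hmain, ← σ.tsum_eq (fun m => Complex.exp (Real.pi * Complex.I * (-1 / z) * (‖vec b m‖ ^ 2 : ℝ)) *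
          Complex.exp (2 * Real.pi * Complex.I * (⟪vec b m, u⟫ : ℝ))), ← tsum_mul_left]
    apply tsum_congr
    intro m
    rw [echar, hechar, A.apply_symm_apply]
    ring
  · intro R
    refine ⟨fun m => Real.exp (Real.pi * z.im * (‖(A : (Fin n → ℝ) →L[ℝ] EuclideanSpace ℝ (Fin n))‖ * R) ^ 2) *
      Real.exp (-(Real.pi * z.im / 2 * ‖vec b m‖ ^ 2)), ?_, ?_⟩
    · exact (vec_summable b _ (by have := Real.pi_pos; positivity)).mul_left _
    · intro m x hx
      simp only [hG]
      rw [th_norm, map_add]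
      apply shift_bound b z.im _ hz (A x)
      exact (A : (Fin n → ℝ) →L[ℝ] EuclideanSpace ℝ (Fin n)).le_opNorm_of_le hx
  · intro m
    rw [← gauss_integral z hz, ← hcomp (fun v => Complex.exp (-(2 * Real.pi * Complex.I * (⟪vec b (σ m), v⟫ : ℝ))) *
      Complex.exp (Real.pi * Complex.I * z * (‖v‖ ^ 2 : ℝ)))]
    congr 1
    ext x
    congr 1
    rw [echar, ← hechar]
    congr 1
    simp
  · exact ((σ.summable_iff.mpr hF0).mul_left _).mul_left _
end

section
variable {n : ℕ} {L : Set (EuclideanSpace ℝ (Fin n))}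

lemma normOf_eq (x : EuclideanSpace ℝ (Fin n)) : normOf x = ‖x‖ ^ 2 := real_inner_self_eq_norm_sq x

lemma dual_add {x y : EuclideanSpace ℝ (Fin n)} (hx : x ∈ dualSet L) (hy : y ∈ dualSet L) :
    x + y ∈ dualSet L := by
  intro w hw
  obtain ⟨a, ha⟩ := hx w hw
  obtain ⟨b, hb⟩ := hy w hw
  exact ⟨a + b, by rw [inner_add_left, ha, hb]; push_cast; ring⟩

lemma dual_zsmul {x : EuclideanSpace ℝ (Fin n)} (hx : x ∈ dualSet L) (k : ℤ) :
    (k : ℝ) • x ∈ dualSet L := by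
  intro w hw
  obtain ⟨a, ha⟩ := hx w hw
  exact ⟨k * a, by rw [real_inner_smul_left, ha]; push_cast; ring⟩

variable (hL : IsUnimodularLattice L)
include hL

lemma uni_iff (x : EuclideanSpace ℝ (Fin n)) : x ∈ L ↔ x ∈ dualSet L := by
  have : L = dualSet L := hL
  exact ⟨fun h => this ▸ h, fun h => this.symm ▸ h⟩

lemma uni_add {x y : EuclideanSpace ℝ (Fin n)} (hx : x ∈ L) (hy : y ∈ L) : x + y ∈ L :=
  (uni_iff hL _).mpr (dual_add ((uni_iff hL _).mp hx) ((uni_iff hL _).mp hy))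

lemma uni_zsmul {x : EuclideanSpace ℝ (Fin n)} (hx : x ∈ L) (k : ℤ) : (k : ℝ) • x ∈ L :=
  (uni_iff hL _).mpr (dual_zsmul ((uni_iff hL _).mp hx) k)

lemma uni_neg {x : EuclideanSpace ℝ (Fin n)} (hx : x ∈ L) : -x ∈ L := by
  simpa using uni_zsmul hL hx (-1)

lemma uni_sub {x y : EuclideanSpace ℝ (Fin n)} (hx : x ∈ L) (hy : y ∈ L) : x - y ∈ L := by
  rw [sub_eq_add_neg]; exact uni_add hL hx (uni_neg hL hy)

lemma uni_zero : (0 : EuclideanSpace ℝ (Fin n)) ∈ L :=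
  (uni_iff hL _).mpr (fun y _ => ⟨0, by simp⟩)

lemma uni_int {x y : EuclideanSpace ℝ (Fin n)} (hx : x ∈ L) (hy : y ∈ L) :
    ∃ m : ℤ, ⟪x, y⟫ = (m : ℝ) := (uni_iff hL x).mp hx y hy

lemma uni_norm {x : EuclideanSpace ℝ (Fin n)} (hx : x ∈ L) : ∃ m : ℤ, ‖x‖ ^ 2 = (m : ℝ) := by
  rw [← normOf_eq]; exact uni_int hL hx hx

lemma uni_small {x : EuclideanSpace ℝ (Fin n)} (hx : x ∈ L) (h : ‖x‖ < 1) : x = 0 := by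
  obtain ⟨m, hm⟩ := uni_norm hL hx
  have h0 := norm_nonneg x
  have h1 : (m : ℝ) < 1 := by rw [← hm]; nlinarith
  have h2 : (0 : ℝ) ≤ m := by rw [← hm]; positivity
  have h3 : m = 0 := by
    have : m < 1 := by exact_mod_cast h1
    have : 0 ≤ m := by exact_mod_cast h2
    omega
  rw [h3] at hm
  simpa using hm

lemma uni_basis : ∃ b : Module.Basis (Fin n) ℝ (EuclideanSpace ℝ (Fin n)),
    ∀ x, x ∈ L ↔ ∃ m, vec b m = x := by
  let S : AddSubgroup (EuclideanSpace ℝ (Fin n)) :=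
    { carrier := L, zero_mem' := uni_zero hL, add_mem' := uni_add hL, neg_mem' := uni_neg hL }
  let LL : Submodule ℤ (EuclideanSpace ℝ (Fin n)) := AddSubgroup.toIntSubmodule S
  have hmem : ∀ x, x ∈ LL ↔ x ∈ L := fun x => Iff.rfl
  have hdisc : DiscreteTopology LL := by
    apply discreteTopology_of_isOpen_singleton_zero
    rw [Metric.isOpen_singleton_iff]
    refine ⟨1, one_pos, fun y hy => ?_⟩
    rw [dist_zero_right] at hy
    exact Subtype.ext (uni_small hL y.2 hy)
  have hspan : Submodule.span ℝ (LL : Set (EuclideanSpace ℝ (Fin n))) = ⊤ := by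
    rw [← Submodule.orthogonal_eq_bot_iff, Submodule.eq_bot_iff]
    intro v hv
    by_contra hv0
    have hnv : 0 < ‖v‖ := norm_pos_iff.mpr hv0
    have h1 : (1 / (2 * ‖v‖)) • v ∈ L := by
      rw [uni_iff hL]
      intro y hy
      refine ⟨0, ?_⟩
      rw [real_inner_smul_left, real_inner_comm]
      have := (Submodule.mem_orthogonal _ _).mp hv y (Submodule.subset_span hy)
      rw [this]; simp
    have h2 : ‖(1 / (2 * ‖v‖)) • v‖ = 1 / 2 := by
      rw [norm_smul, Real.norm_of_nonneg (by positivity)]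
      field_simp
    have h3 := uni_small hL h1 (by rw [h2]; norm_num)
    rw [h3] at h2
    norm_num at h2
  have hz : IsZLattice ℝ LL := ⟨hspan⟩
  have : Module.Finite ℤ LL := ZLattice.module_finite ℝ LL
  have : Module.Free ℤ LL := ZLattice.module_free ℝ LL
  have hr : Module.finrank ℤ LL = n := by
    rw [ZLattice.rank ℝ LL, finrank_euclideanSpace_fin]
  let b0 : Module.Basis (Fin n) ℤ LL := Module.finBasisOfFinrankEq ℤ LL hr
  refine ⟨b0.ofZLatticeBasis ℝ LL, fun x => ?_⟩
  constructor
  · intro hx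
    let y : LL := ⟨x, hx⟩
    refine ⟨fun i => b0.repr y i, ?_⟩
    rw [vec_eq]
    simp only [Module.Basis.ofZLatticeBasis_apply]
    have := congrArg Subtype.val (b0.sum_repr y)
    rw [AddSubmonoidClass.coe_finsetSum] at this
    exact this
  · rintro ⟨m, rfl⟩
    rw [← hmem, vec_eq]
    refine Submodule.sum_mem _ (fun i _ => Submodule.smul_mem _ _ ?_)
    rw [Module.Basis.ofZLatticeBasis_apply]
    exact (b0 i).2

omit hL in
lemma exists_inner (b : Module.Basis (Fin n) ℝ (EuclideanSpace ℝ (Fin n))) (c : Fin n → ℝ) :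
    ∃ y, ∀ i, ⟪y, b i⟫ = c i := by
  let f : EuclideanSpace ℝ (Fin n) →ₗ[ℝ] ℝ := b.constr ℝ c
  refine ⟨(InnerProductSpace.toDual ℝ _).symm f.toContinuousLinearMap, fun i => ?_⟩
  rw [InnerProductSpace.toDual_symm_apply]
  simp [f]

variable (b : Module.Basis (Fin n) ℝ (EuclideanSpace ℝ (Fin n)))
  (hb : ∀ x, x ∈ L ↔ ∃ m, vec b m = x)
include hb

omit hL in
lemma vec_mem (m) : vec b m ∈ L := (hb _).mpr ⟨m, rfl⟩

omit hL in
lemma b_mem (i : Fin n) : b i ∈ L := by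
  rw [hb]
  refine ⟨Pi.single i 1, ?_⟩
  rw [vec_eq]
  simp [Pi.single_apply, ite_smul]

lemma uni_sigma : ∃ σ : (Fin n → ℤ) ≃ (Fin n → ℤ), ∀ m i, ⟪vec b (σ m), b i⟫ = (m i : ℝ) := by
  have h := fun k i => uni_int hL (vec_mem b hb k) (b_mem b hb i)
  choose ρ hρ using h
  have hbij : Function.Bijective ρ := by
    constructor
    · intro k k' hk
      apply vec_inj b
      apply InnerProductSpace.ext_inner_right_basis (𝕜 := ℝ) b
      intro i
      rw [hρ, hρ, hk]
    · intro m
      obtain ⟨y, hy⟩ := exists_inner b (fun i => (m i : ℝ))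
      have : y ∈ L := by
        rw [uni_iff hL]
        intro x hx
        obtain ⟨k, rfl⟩ := (hb x).mp hx
        refine ⟨∑ i, k i * m i, ?_⟩
        rw [vec, AA_apply, inner_sum]
        push_cast
        refine Finset.sum_congr rfl (fun i _ => ?_)
        rw [real_inner_smul_right, hy]
        rfl
      obtain ⟨k, hk⟩ := (hb y).mp this
      refine ⟨k, ?_⟩
      ext i
      have h1 := hρ k i
      rw [hk, hy] at h1
      exact_mod_cast h1.symm
  refine ⟨(Equiv.ofBijective ρ hbij).symm, fun m i => ?_⟩
  rw [hρ]
  have := (Equiv.ofBijective ρ hbij).apply_symm_apply m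
  exact_mod_cast congrFun this i

lemma uni_char : ∃ u : EuclideanSpace ℝ (Fin n), ∀ x ∈ L, ∃ k : ℤ, 2 * ⟪u, x⟫ = ‖x‖ ^ 2 + 2 * (k : ℝ) := by
  obtain ⟨u, hu⟩ := exists_inner b (fun i => ‖b i‖ ^ 2 / 2)
  refine ⟨u, ?_⟩
  have hspan : ∀ x ∈ Submodule.span ℤ (Set.range b), x ∈ L ∧ ∃ k : ℤ, 2 * ⟪u, x⟫ = ‖x‖ ^ 2 + 2 * (k : ℝ) := by
    intro x hx
    induction hx using Submodule.span_induction with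
    | mem x hx =>
      obtain ⟨i, rfl⟩ := hx
      refine ⟨b_mem b hb i, 0, ?_⟩
      rw [hu]; push_cast; ring
    | zero => exact ⟨uni_zero hL, 0, by simp⟩
    | add x y _ _ hx hy =>
      obtain ⟨hx, k, hk⟩ := hx
      obtain ⟨hy, l, hl⟩ := hy
      obtain ⟨p, hp⟩ := uni_int hL hx hy
      refine ⟨uni_add hL hx hy, k + l - p, ?_⟩
      rw [inner_add_right, norm_add_sq_real, hp]
      push_cast
      linarith
    | smul a x _ hx =>
      obtain ⟨hx, k, hk⟩ := hx
      obtain ⟨p, hp⟩ := uni_norm hL hx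
      rw [← Int.cast_smul_eq_zsmul ℝ a x]
      obtain ⟨r, hr⟩ := Int.even_mul_pred_self a
      refine ⟨uni_zsmul hL hx a, a * k - r * p, ?_⟩
      have hr' : (a : ℝ) * (a - 1) = r + r := by exact_mod_cast hr
      rw [real_inner_smul_right, norm_smul, mul_pow, Real.norm_eq_abs, sq_abs]
      rw [hp] at hk ⊢
      push_cast
      linear_combination (a : ℝ) * hk - p * hr'
  intro x hx
  refine (hspan x ?_).2
  obtain ⟨m, rfl⟩ := (hb x).mp hx
  rw [vec_eq]
  exact Submodule.sum_mem _ (fun i _ => Submodule.smul_mem _ _ (Submodule.subset_span ⟨i, rfl⟩))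

omit hb
variable (u : EuclideanSpace ℝ (Fin n))
  (hu : ∀ x ∈ L, ∃ k : ℤ, 2 * ⟪u, x⟫ = ‖x‖ ^ 2 + 2 * (k : ℝ))
include hu

lemma two_u_mem : (2 : ℝ) • u ∈ L := by
  rw [uni_iff hL]
  intro x hx
  obtain ⟨k, hk⟩ := hu x hx
  obtain ⟨m, hm⟩ := uni_norm hL hx
  refine ⟨m + 2 * k, ?_⟩
  rw [real_inner_smul_left, hk, hm]
  push_cast; ring

lemma shadow_iff (hodd : IsOddLattice L) (s : EuclideanSpace ℝ (Fin n)) :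
    s ∈ shadow L ↔ s - u ∈ L := by
  constructor
  · rintro ⟨hs, hsL⟩
    rw [uni_iff hL] at hsL
    have : ∃ y ∈ L, ¬ ∃ m : ℤ, ⟪s, y⟫ = (m : ℝ) := by
      by_contra hcon
      push Not at hcon
      exact hsL (fun y hy => by
        obtain ⟨m, hm⟩ := hcon y hy
        exact ⟨m, hm⟩)
    obtain ⟨y, hy, hyn⟩ := this
    obtain ⟨py, hpy⟩ := uni_norm hL hy
    have hpyo : Odd py := by
      rw [← Int.not_even_iff_odd]
      rintro ⟨r, hr⟩
      apply hyn
      apply hs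
      refine ⟨hy, r, ?_⟩
      rw [normOf_eq, hpy, hr]; push_cast; ring
    obtain ⟨w, hw⟩ := hs ((2 : ℝ) • y) ⟨by simpa using uni_zsmul hL hy 2, 2 * py, by
      rw [normOf_eq, norm_smul, mul_pow, hpy]; norm_num; ring⟩
    rw [real_inner_smul_right] at hw
    have hwo : Odd w := by
      rw [← Int.not_even_iff_odd]
      rintro ⟨r, hr⟩
      apply hyn
      refine ⟨r, ?_⟩
      rw [hr] at hw; push_cast at hw; linarith
    rw [uni_iff hL]
    intro x hx
    obtain ⟨px, hpx⟩ := uni_norm hL hx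
    obtain ⟨k, hk⟩ := hu x hx
    rcases Int.even_or_odd px with ⟨r, hr⟩ | ⟨r, hr⟩
    · obtain ⟨j, hj⟩ := hs x ⟨hx, r, by rw [normOf_eq, hpx, hr]; push_cast; ring⟩
      refine ⟨j - r - k, ?_⟩
      rw [inner_sub_left, hj]
      rw [hpx, hr] at hk
      push_cast at hk ⊢
      linarith
    · obtain ⟨p, hp⟩ := uni_int hL hx hy
      obtain ⟨r', hr'⟩ := hpyo
      obtain ⟨j, hj⟩ := hs (x - y) ⟨uni_sub hL hx hy, r + r' + 1 - p, by
        rw [normOf_eq, norm_sub_sq_real, hpx, hpy, hp, hr, hr']; push_cast; ring⟩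
      obtain ⟨l, hl⟩ := hwo
      rw [inner_sub_right] at hj
      refine ⟨j + l - r - k, ?_⟩
      rw [inner_sub_left]
      rw [hpx, hr] at hk
      rw [hl] at hw
      push_cast at hk hw ⊢
      linarith
  · intro hs
    constructor
    · rintro x ⟨hx, r, hr⟩
      obtain ⟨k, hk⟩ := hu x hx
      obtain ⟨j, hj⟩ := uni_int hL hs hx
      refine ⟨j + r + k, ?_⟩
      rw [inner_sub_left] at hj
      rw [normOf_eq] at hr
      rw [hr] at hk
      push_cast
      linarith
    · intro hsL
      obtain ⟨o, ho, m, ⟨r, hr⟩, hm⟩ := hodd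
      obtain ⟨k, hk⟩ := hu o ho
      obtain ⟨j, hj⟩ := uni_int hL hs ho
      obtain ⟨j', hj'⟩ := uni_int hL hsL ho
      rw [normOf_eq] at hm
      rw [inner_sub_left] at hj
      rw [hm, hr] at hk
      push_cast at hk
      have : (2 * (j' - j) : ℝ) = 2 * r + 1 + 2 * k := by linarith
      have : 2 * (j' - j) = 2 * r + 1 + 2 * k := by exact_mod_cast this
      omega
end

section
lemma neg_inv_im (z : ℂ) (hz : 0 < z.im) : 0 < (-1 / z : ℂ).im := by
  rw [neg_div, one_div, Complex.neg_im, Complex.inv_im, neg_div, neg_neg]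
  have hz0 : z ≠ 0 := by rintro rfl; simp at hz
  exact div_pos hz (Complex.normSq_pos.mpr hz0)

lemma hh_inv (z : ℂ) (hz : 0 < z.im) : hh (-1 / z) = (hh z)⁻¹ := by
  have hz0 : z ≠ 0 := by rintro rfl; simp at hz
  have e : -Complex.I * (-1 / z) = (-Complex.I * z)⁻¹ := by
    field_simp
    rw [Complex.I_sq]
  rw [hh, hh, e, Complex.inv_cpow]
  intro h
  have h2 := Complex.arg_eq_pi_iff.mp h
  simp at h2
  linarith [h2.1]

lemma hh_I : hh Complex.I = 1 := by
  simp [hh]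

/-- the auxiliary point `-1 - 1 / i` -/
def wI : ℂ := -1 - 1 / Complex.I

lemma wI_eq : wI = -1 + Complex.I := by
  rw [wI]; simp

lemma wI_im : 0 < wI.im := by rw [wI_eq]; simp

lemma wI_inv : -1 / wI = -1 / (Complex.I + 1) + 1 := by
  have h1 : (Complex.I + 1 : ℂ) ≠ 0 := by
    intro h; have := congrArg Complex.im h; simp at this
  have h2 : (-1 + Complex.I : ℂ) ≠ 0 := by
    intro h; have := congrArg Complex.im h; simp at this
  rw [wI_eq]
  field_simp
  linear_combination -Complex.I_sq

lemma wI_two : wI + 2 = -1 / Complex.I + 1 := by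
  rw [wI_eq]; simp; ring

lemma I1_im : 0 < (Complex.I + 1 : ℂ).im := by simp

lemma hh_bracket : hh wI * hh Complex.I = hh (Complex.I + 1) * zeta8 := by
  have h1 := t4_S (Complex.I + 1) I1_im
  rw [t4, ← wI_inv, t2_T] at h1
  have h2 := t3_S wI wI_im
  have h3 := t4_S Complex.I (by simp)
  rw [t4, ← wI_two, Th3_two] at h3
  rw [t3, t3, h3] at h2
  rw [h2] at h1
  have hne : t2 Complex.I ≠ 0 := by
    rw [t2]
    have := fam2.ne_zero 1 one_pos
    rw [Complex.ofReal_one, mul_one] at this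
    exact mul_ne_zero (Complex.exp_ne_zero _) this
  apply mul_right_cancel₀ hne
  linear_combination h1

variable {n : ℕ} {L : Set (EuclideanSpace ℝ (Fin n))} (hL : IsUnimodularLattice L)
  (b : Module.Basis (Fin n) ℝ (EuclideanSpace ℝ (Fin n)))
  (hb : ∀ x, x ∈ L ↔ ∃ m, vec b m = x)
  (u : EuclideanSpace ℝ (Fin n))
  (hu : ∀ x ∈ L, ∃ k : ℤ, 2 * ⟪u, x⟫ = ‖x‖ ^ 2 + 2 * (k : ℝ))

/-- theta series of the lattice -/
def thL (z : ℂ) : ℂ := Th (fun m => ‖(0 : EuclideanSpace ℝ (Fin n)) + vec b m‖ ^ 2) z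
/-- theta series of the shadow -/
def thS (z : ℂ) : ℂ := Th (fun m => ‖u + vec b m‖ ^ 2) z

include hL hb in
lemma thL_two (z : ℂ) : thL b (z + 2) = thL b z := by
  rw [thL, thL, Th, Th]
  apply tsum_congr
  intro m
  obtain ⟨k, hk⟩ := uni_norm hL (vec_mem b hb m)
  rw [zero_add, hk]
  have h := exp_pi_int (2 * k) (even_two_mul k)
  have : (Real.pi * Complex.I * (z + 2) * (k : ℝ) : ℂ) =
      Real.pi * Complex.I * z * (k : ℝ) + Real.pi * Complex.I * (2 * k : ℤ) := by
    push_cast; ring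
  rw [this, Complex.exp_add, h, mul_one]

include hL hb hu in
lemma theta_rel : (∀ z : ℂ, 0 < z.im → thL b (-1 / z) = hh z ^ n * thL b z) ∧
    (∀ z : ℂ, 0 < z.im → thL b (-1 / z + 1) = hh z ^ n * thS b u z) := by
  obtain ⟨σ, hσ⟩ := uni_sigma hL b hb
  obtain ⟨κ, hκ⟩ := theta_poisson b σ hσ
  have ha : ∀ z : ℂ, 0 < z.im → thL b z = κ * (hh z ^ n)⁻¹ * thL b (-1 / z) := by
    intro z hz
    have := hκ z hz 0
    rw [thL, this, thL, Th]
    congr 1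
    apply tsum_congr
    intro m
    simp
  have hI : thL b Complex.I ≠ 0 := by
    have := (famL b 0).ne_zero 1 one_pos
    rw [Complex.ofReal_one, mul_one] at this
    exact this
  have hk1 : κ = 1 := by
    have := ha Complex.I (by simp)
    have e : (-1 / Complex.I : ℂ) = Complex.I := by simp
    rw [hh_I, e] at this
    simp only [one_pow, inv_one, mul_one] at this
    apply mul_right_cancel₀ hI
    rw [← this, one_mul]
  subst hk1
  constructor
  · intro z hz
    have h := hh_ne z hz
    rw [ha z hz]
    field_simp
  · intro z hz
    have h := hh_ne z hz
    have h2 : thS b u z = _ := hκ z hz u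
    rw [h2, thL, Th]
    rw [one_mul, ← mul_assoc, mul_inv_cancel₀ (pow_ne_zero _ h), one_mul]
    apply tsum_congr
    intro m
    obtain ⟨k, hk⟩ := hu _ (vec_mem b hb m)
    rw [← Complex.exp_add, zero_add, Complex.exp_eq_exp_iff_exists_int]
    refine ⟨-k, ?_⟩
    rw [real_inner_comm]
    have hk' : (2 : ℂ) * ((⟪u, vec b m⟫ : ℝ) : ℂ) = ((‖vec b m‖ ^ 2 : ℝ) : ℂ) + 2 * (k : ℂ) := by
      exact_mod_cast hk
    push_cast at hk' ⊢
    linear_combination (-Real.pi * Complex.I : ℂ) * hk'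

include hL hb hu in
lemma thS_S (z : ℂ) (hz : 0 < z.im) : thS b u (-1 / z) = hh z ^ n * thL b (z + 1) := by
  have hz0 : z ≠ 0 := by rintro rfl; simp at hz
  have := (theta_rel hL b hb u hu).2 (-1 / z) (neg_inv_im z hz)
  have h := hh_ne z hz
  rw [hh_inv z hz] at this
  have e : -1 / (-1 / z) + 1 = z + 1 := by field_simp
  rw [e] at this
  rw [this]
  rw [inv_pow]
  field_simp

include hL hb hu in
lemma shadow_norms : ∃ c : ℤ, ∀ m, ∃ k : ℤ, ‖u + vec b m‖ ^ 2 = (c : ℝ) / 4 + 2 * k := by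
  obtain ⟨c, hc⟩ := uni_norm hL (two_u_mem hL u hu)
  refine ⟨c, fun m => ?_⟩
  have hm := vec_mem b hb m
  obtain ⟨k, hk⟩ := hu _ hm
  obtain ⟨p, hp⟩ := uni_norm hL hm
  refine ⟨p + k, ?_⟩
  rw [norm_smul, mul_pow] at hc
  norm_num at hc
  rw [norm_add_sq_real, hk, hp]
  push_cast
  linarith

lemma thS_T_aux (c : ℤ) (hc : ∀ m, ∃ k : ℤ, ‖u + vec b m‖ ^ 2 = (c : ℝ) / 4 + 2 * k) (z : ℂ) :
    thS b u (z + 1) = Complex.exp (Real.pi * Complex.I * c / 4) * thS b u z := by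
  rw [thS, thS, Th, Th, ← tsum_mul_left]
  apply tsum_congr
  intro m
  obtain ⟨k, hk⟩ := hc m
  rw [← Complex.exp_add, Complex.exp_eq_exp_iff_exists_int]
  refine ⟨k, ?_⟩
  rw [hk]
  push_cast
  ring

include hL hb hu in
lemma shadow_c (c : ℤ) (hc : ∀ m, ∃ k : ℤ, ‖u + vec b m‖ ^ 2 = (c : ℝ) / 4 + 2 * k) :
    ∃ j : ℤ, c = n + 8 * j := by
  obtain ⟨hr1, hr2⟩ := theta_rel hL b hb u hu
  have h1 := hr2 (Complex.I + 1) I1_im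
  rw [← wI_inv, thS_T_aux b u c hc, hr1 wI wI_im, ← thL_two hL b hb, wI_two, hr2 Complex.I (by simp)] at h1
  have hI : thS b u Complex.I ≠ 0 := by
    have := (famL b u).ne_zero 1 one_pos
    rw [Complex.ofReal_one, mul_one] at this
    exact this
  rw [← mul_assoc, ← mul_pow, hh_bracket, ← mul_assoc, mul_pow] at h1
  have h2 := mul_right_cancel₀ hI h1
  have h3 := mul_left_cancel₀ (pow_ne_zero n (hh_ne _ I1_im)) h2
  rw [zeta8, ← Complex.exp_nat_mul, Complex.exp_eq_exp_iff_exists_int] at h3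
  obtain ⟨j, hj⟩ := h3
  refine ⟨-j, ?_⟩
  have hpi : (Real.pi : ℂ) ≠ 0 := Complex.ofReal_ne_zero.mpr Real.pi_ne_zero
  have hII : Complex.I ≠ 0 := Complex.I_ne_zero
  have h4 : (Real.pi * Complex.I : ℂ) * c = (Real.pi * Complex.I : ℂ) * (n + 8 * (-j)) := by
    linear_combination -4 * hj
  have h5 := mul_left_cancel₀ (mul_ne_zero hpi hII) h4
  exact_mod_cast h5
end

section
open Asymptotics UpperHalfPlane

lemma ThetaFam.finite {ι : Type*} {N : ι → ℝ} (h : ThetaFam N) (r : ℝ) : {i | N i ≤ r}.Finite := by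
  have h1 := (h.summ 1 one_pos).tendsto_cofinite_zero
  have h2 := h1.eventually (gt_mem_nhds (Real.exp_pos (-Real.pi * 1 * r)))
  rw [Filter.eventually_cofinite] at h2
  refine h2.subset ?_
  intro i hi
  have hi' : N i ≤ r := hi
  simp only [Set.mem_ofPred_eq, not_lt]
  apply Real.exp_le_exp.mpr
  have := mul_le_mul_of_nonneg_left hi' Real.pi_pos.le
  linarith

/-- a theta family whose exponents below `s` all equal `r` -/
lemma ThetaFam.lead {ι : Type*} {N : ι → ℝ} (h : ThetaFam N) (r s : ℝ)
    (hs : ∀ i, N i = r ∨ s ≤ N i) :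
    (fun τ : ℍ => Th N τ - ({i | N i = r}.ncard : ℂ) * Complex.exp (Real.pi * Complex.I * τ * r))
      =O[atImInfty] fun τ => Real.exp (-Real.pi * s * τ.im) := by
  have hfin : {i | N i = r}.Finite := (h.finite r).subset (fun i hi => le_of_eq hi)
  have := h.tail hfin.toFinset s (fun i hi => by
    rcases hs i with h1 | h1
    · exact absurd (hfin.mem_toFinset.mpr h1) hi
    · exact h1)
  refine this.congr_left (fun τ => ?_)
  congr 1
  rw [Finset.sum_congr rfl (g := fun _ => Complex.exp (Real.pi * Complex.I * τ * r)), Finset.sum_const,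
    ← Set.ncard_eq_toFinset_card _ hfin, nsmul_eq_mul]
  intro i hi
  have : N i = r := hfin.mem_toFinset.mp hi
  rw [this]

lemma ThetaFam.O {ι : Type*} {N : ι → ℝ} (h : ThetaFam N) (s : ℝ) (hs : ∀ i, s ≤ N i) :
    (fun τ : ℍ => Th N τ) =O[atImInfty] fun τ => Real.exp (-Real.pi * s * τ.im) := by
  simpa using h.tail ∅ s (fun i _ => hs i)

lemma qq4 (τ : ℍ) : Complex.exp (Real.pi * Complex.I * τ * (4 : ℝ)) = qq τ ^ 4 :=
  qq_exp τ 4 4 (by norm_num)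

variable {L : Set (EuclideanSpace ℝ (Fin 41))} (hL : IsUnimodularLattice L)
  (b : Module.Basis (Fin 41) ℝ (EuclideanSpace ℝ (Fin 41)))
  (hb : ∀ x, x ∈ L ↔ ∃ m, vec b m = x)
  (u : EuclideanSpace ℝ (Fin 41))
  (hu : ∀ x ∈ L, ∃ k : ℤ, 2 * ⟪u, x⟫ = ‖x‖ ^ 2 + 2 * (k : ℝ))

lemma vec_zero {n : ℕ} (b : Module.Basis (Fin n) ℝ (EuclideanSpace ℝ (Fin n))) : vec b 0 = 0 := by
  rw [vec_eq]; simp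

include hL hb in
/-- expansion of the theta series of `L` -/
lemma thL_exp (hmin : HasMinNorm L 4) :
    (fun τ : ℍ => thL b τ - (1 + (numVecsOfNorm L 4 : ℂ) * Complex.exp (Real.pi * Complex.I * τ * (4 : ℝ))))
      =O[atImInfty] fun τ => Real.exp (-Real.pi * 5 * τ.im) := by
  classical
  have hfam := famL b 0
  simp only [zero_add] at hfam
  set N : (Fin 41 → ℤ) → ℝ := fun m => ‖vec b m‖ ^ 2 with hN
  have hthL : ∀ z, thL b z = Th N z := by
    intro z; simp only [thL, zero_add, hN]
  have hfin : {m | N m = 4}.Finite := (hfam.finite 4).subset (fun i hi => le_of_eq hi)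
  have hcard : numVecsOfNorm L 4 = {m | N m = 4}.ncard := by
    rw [numVecsOfNorm, ← Set.ncard_image_of_injective _ (vec_inj b)]
    congr 1
    ext x
    constructor
    · rintro ⟨hx, hx4⟩
      obtain ⟨m, rfl⟩ := (hb x).mp hx
      exact ⟨m, by rw [normOf_eq] at hx4; exact hx4, rfl⟩
    · rintro ⟨m, hm, rfl⟩
      exact ⟨vec_mem b hb m, by rw [normOf_eq]; exact hm⟩
  have h0 : (0 : Fin 41 → ℤ) ∉ hfin.toFinset := by
    rw [hfin.mem_toFinset]
    intro h
    have h' : N 0 = 4 := h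
    simp [hN, vec_zero] at h'
  have := hfam.tail (insert 0 hfin.toFinset) 5 (fun m hm => by
    rw [Finset.mem_insert, not_or, hfin.mem_toFinset] at hm
    obtain ⟨hm0, hm4⟩ := hm
    have hm4' : ‖vec b m‖ ^ 2 ≠ 4 := hm4
    obtain ⟨k, hk⟩ := uni_norm hL (vec_mem b hb m)
    have h4 : (4 : ℝ) ≤ normOf (vec b m) := hmin.2 ⟨_, vec_mem b hb m, fun h => hm0 (vec_inj b (by rw [h, vec_zero])), rfl⟩
    rw [normOf_eq, hk] at h4
    rw [hk] at hm4'
    change (5 : ℝ) ≤ ‖vec b m‖ ^ 2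
    rw [hk]
    have h4' : 4 ≤ k := by exact_mod_cast h4
    have h4'' : k ≠ 4 := by exact_mod_cast hm4'
    have : 5 ≤ k := by omega
    exact_mod_cast this)
  refine this.congr_left (fun τ => ?_)
  rw [hthL, Finset.sum_insert h0]
  congr 2
  · simp [hN, vec_zero]
  · rw [Finset.sum_congr rfl (g := fun _ => Complex.exp (Real.pi * Complex.I * τ * (4 : ℝ))), Finset.sum_const,
      ← Set.ncard_eq_toFinset_card _ hfin, nsmul_eq_mul, hcard]
    intro i hi
    have : N i = 4 := hfin.mem_toFinset.mp hi
    rw [this]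

include hL hb in
lemma f1_exp (hmin : HasMinNorm L 4) :
    (fun τ : ℍ => (thL b τ - G1 τ) - ((numVecsOfNorm L 4 : ℂ) - 15170) * Complex.exp (Real.pi * Complex.I * τ * (4 : ℝ)))
      =O[atImInfty] fun τ => Real.exp (-Real.pi * 5 * τ.im) := by
  have h1 := thL_exp hL b hb hmin
  have h2 : (fun τ : ℍ => G1 τ - (1 + 0 * qq τ + 0 * qq τ ^ 2 + 0 * qq τ ^ 3 + 15170 * qq τ ^ 4))
      =O[atImInfty] fun τ => Real.exp (-Real.pi * 5 * τ.im) := by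
    have h : E5 _ _ _ _ _ _ := G1_E5
    have h' := IsBigO.norm_right h
    refine h'.congr_right (fun τ => ?_)
    rw [qq_pow_norm]; norm_num
  refine (h1.sub h2).congr_left (fun τ => ?_)
  rw [qq4]
  ring

include hL hb hu in
lemma vanish (p r : ℝ) (hpr : 41 / 4 < 2 * p + r)
    (h1 : (fun τ : ℍ => thL b τ - G1 τ) =O[atImInfty] fun τ => Real.exp (-Real.pi * p * τ.im))
    (h3 : (fun τ : ℍ => thS b u τ - G3 τ) =O[atImInfty] fun τ => Real.exp (-Real.pi * r * τ.im)) :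
    (∀ z : ℂ, 0 < z.im → thL b z - G1 z = 0) ∧ (∀ z : ℂ, 0 < z.im → thS b u z - G3 z = 0) := by
  obtain ⟨hr1, hr2⟩ := theta_rel hL b hb u hu
  have hz8 : zeta8 ^ 8 = 1 := by
    rw [show (8 : ℕ) = 4 * 2 from rfl, pow_mul, zeta8_pow4]; norm_num
  have h8 : ∀ z : ℂ, (hh z ^ 41) ^ 8 = z ^ 164 := by
    intro z
    have : (hh z ^ 41) ^ 8 = (hh z ^ 2) ^ 164 := by ring
    rw [this, hh_sq, mul_pow]
    have : (-Complex.I) ^ 164 = 1 := by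
      rw [show (164 : ℕ) = 4 * 41 from rfl, pow_mul]
      have : (-Complex.I) ^ 4 = 1 := by
        rw [neg_pow, Complex.I_pow_four]; norm_num
      rw [this, one_pow]
    rw [this, one_mul]
  have hdL : DifferentiableOn ℂ (thL b) {z | 0 < z.im} := (famL b 0).diff
  have hdS : DifferentiableOn ℂ (thS b u) {z | 0 < z.im} := (famL b u).diff
  have hdL1 : DifferentiableOn ℂ (fun z => thL b (z + 1)) {z | 0 < z.im} := by
    apply DifferentiableOn.comp (t := {z : ℂ | 0 < z.im}) hdL (by fun_prop)
    intro z hz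
    simpa using hz
  apply modular_vanish (fun z => thL b z - G1 z) (fun z => thL b (z + 1) - G2 z)
    (fun z => thS b u z - G3 z) (hdL.sub G1_diff) (hdL1.sub G2_diff) (hdS.sub G3_diff)
    _ _ _ _ _ _ p r hpr h1 h3
  · intro z hz
    simp only [G1_T]
  · intro z hz
    simp only [G2_T]
    rw [show z + 1 + 1 = z + 2 by ring, thL_two hL b hb]
  · intro z hz
    obtain ⟨c, hc⟩ := shadow_norms hL b hb u hu
    obtain ⟨j, hj⟩ := shadow_c hL b hb u hu c hc
    have e : Complex.exp (Real.pi * Complex.I * c / 4) = zeta8 := by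
      rw [zeta8, Complex.exp_eq_exp_iff_exists_int]
      refine ⟨5 + j, ?_⟩
      rw [hj]; push_cast; ring
    simp only [G3_T, thS_T_aux b u c hc, e]
    rw [← mul_sub, mul_pow, hz8, one_mul]
  · intro z hz
    simp only [G1_S z hz, hr1 z hz]
    rw [← mul_sub, mul_pow, h8]
  · intro z hz
    simp only [G2_S z hz, hr2 z hz]
    rw [← mul_sub, mul_pow, h8]
  · intro z hz
    simp only [G3_S z hz, thS_S hL b hb u hu z hz]
    rw [← mul_sub, mul_pow, h8]

include hL hb hu in
lemma shadow_vals (hodd : IsOddLattice L) (hmin : HasMinNorm L 4) (m : Fin 41 → ℤ) :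
    ∃ j : ℤ, 1 ≤ j ∧ ‖u + vec b m‖ ^ 2 = 1 / 4 + 2 * (j : ℝ) := by
  obtain ⟨c, hc⟩ := shadow_norms hL b hb u hu
  obtain ⟨j, hj⟩ := shadow_c hL b hb u hu c hc
  obtain ⟨k, hk⟩ := hc m
  have e : ‖u + vec b m‖ ^ 2 = 1 / 4 + 2 * ((5 + j + k : ℤ) : ℝ) := by
    rw [hk, hj]; push_cast; ring
  refine ⟨5 + j + k, ?_, e⟩
  set s := u + vec b m with hs
  have hsh : s ∈ shadow L := by
    rw [shadow_iff hL u hu hodd, hs, add_sub_cancel_left]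
    exact vec_mem b hb m
  have h2s : (2 : ℝ) • s ∈ L := by
    rw [hs, smul_add]
    apply uni_add hL (two_u_mem hL u hu)
    simpa using uni_zsmul hL (vec_mem b hb m) 2
  have hs0 : s ≠ 0 := by
    intro h; rw [h] at hsh; exact hsh.2 (uni_zero hL)
  have h4 : (4 : ℝ) ≤ normOf ((2 : ℝ) • s) := hmin.2 ⟨_, h2s, by simpa using hs0, rfl⟩
  rw [normOf_eq, norm_smul, mul_pow, e] at h4
  norm_num at h4
  have h5 : (0 : ℝ) < ((5 + j + k : ℤ) : ℝ) := by push_cast; linarith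
  have : 0 < 5 + j + k := by exact_mod_cast h5
  omega
end

theorem kissing_number_dim41 {L : Set (EuclideanSpace ℝ (Fin 41))}
    (huni : IsUnimodularLattice L) (hodd : IsOddLattice L) (hmin : HasMinNorm L 4) :
    numVecsOfNorm L 4 = 15170 ↔ HasSigma L 17 := by
  obtain ⟨b, hb⟩ := uni_basis huni
  obtain ⟨u, hu⟩ := uni_char huni b hb
  have hvals := shadow_vals huni b hb u hu hodd hmin
  have hsh := shadow_iff huni u hu hodd
  have hshv : ∀ m, u + vec b m ∈ shadow L := by
    intro m
    rw [hsh, add_sub_cancel_left]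
    exact vec_mem b hb m
  have hshe : ∀ s ∈ shadow L, ∃ m, s = u + vec b m := by
    intro s hs
    obtain ⟨m, hm⟩ := (hb _).mp ((hsh s).mp hs)
    exact ⟨m, by rw [hm]; abel⟩
  have hf1 := f1_exp huni b hb hmin
  constructor
  · intro hA
    rw [hA] at hf1
    have h1 : (fun τ : UpperHalfPlane => thL b τ - G1 τ) =O[UpperHalfPlane.atImInfty]
        fun τ => Real.exp (-Real.pi * 5 * τ.im) := by
      refine hf1.congr_left (fun τ => ?_)
      push_cast; ring
    have h9 : ∀ m, (9 / 4 : ℝ) ≤ ‖u + vec b m‖ ^ 2 := by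
      intro m
      obtain ⟨j, hj, e⟩ := hvals m
      have : (1 : ℝ) ≤ j := by exact_mod_cast hj
      rw [e]; linarith
    have hS : (fun τ : UpperHalfPlane => thS b u τ) =O[UpperHalfPlane.atImInfty]
      fun τ => Real.exp (-Real.pi * (9 / 4) * τ.im) := (famL b u).O (9 / 4) h9
    have h3 := hS.sub (G3_O.trans (exp_mono_isO (by norm_num : (9 / 4 : ℝ) ≤ 17 / 4)))
    obtain ⟨-, hv⟩ := vanish huni b hb u hu 5 (9 / 4) (by norm_num) h1 h3
    have hSG : ∀ τ : UpperHalfPlane, thS b u τ = G3 τ := fun τ => sub_eq_zero.mp (hv τ τ.2)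
    have hno9 : ∀ m, ‖u + vec b m‖ ^ 2 ≠ 9 / 4 := by
      have hl := (famL b u).lead (9 / 4) (17 / 4) (fun m => by
        obtain ⟨j, hj, e⟩ := hvals m
        rcases hj.eq_or_lt with h | h
        · left; rw [e, ← h]; norm_num
        · right
          have : (2 : ℝ) ≤ j := by exact_mod_cast h
          rw [e]; linarith)
      have hl2 := G3_O.sub hl
      have hz := coef_zero _ (9 / 4) (17 / 4) (by norm_num) (hl2.congr_left (f₂ := fun τ : UpperHalfPlane =>
        (({m | ‖u + vec b m‖ ^ 2 = 9 / 4}.ncard : ℂ)) * Complex.exp (Real.pi * Complex.I * τ * (9 / 4 : ℝ)))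
        (fun τ => by
          rw [← hSG τ, thS]; ring))
      intro m hm
      have hfin : {m | ‖u + vec b m‖ ^ 2 = (9 / 4 : ℝ)}.Finite :=
        ((famL b u).finite (9 / 4)).subset (fun i hi => le_of_eq hi)
      have hz' : {m | ‖u + vec b m‖ ^ 2 = (9 / 4 : ℝ)}.ncard = 0 := by exact_mod_cast hz
      rw [Set.ncard_eq_zero hfin] at hz'
      have : m ∈ {m | ‖u + vec b m‖ ^ 2 = (9 / 4 : ℝ)} := hm
      rw [hz'] at this
      exact this
    have hge2 : ∀ m, ∃ j : ℤ, 2 ≤ j ∧ ‖u + vec b m‖ ^ 2 = 1 / 4 + 2 * (j : ℝ) := by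
      intro m
      obtain ⟨j, hj, e⟩ := hvals m
      refine ⟨j, ?_, e⟩
      rcases hj.eq_or_lt with h | h
      · exfalso
        apply hno9 m
        rw [e, ← h]; norm_num
      · omega
    have hex : ∃ m, ‖u + vec b m‖ ^ 2 = 17 / 4 := by
      by_contra hcon
      push Not at hcon
      have hO := (famL b u).O (21 / 4) (fun m => by
        obtain ⟨j, hj, e⟩ := hge2 m
        rcases hj.eq_or_lt with h | h
        · exfalso
          apply hcon m
          rw [e, ← h]; norm_num
        · have : (3 : ℝ) ≤ j := by exact_mod_cast h
          rw [e]; linarith)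
      have hz := coef_zero 104960 (17 / 4) (21 / 4) (by norm_num) ((hO.sub G3_lead).congr_left (fun τ => by
        rw [← hSG τ, thS]; ring))
      norm_num at hz
    obtain ⟨m, hm⟩ := hex
    refine ⟨17 / 4, ⟨⟨u + vec b m, hshv m, by rw [normOf_eq, hm]⟩, ?_⟩, by norm_num⟩
    rintro x ⟨s, hs, rfl⟩
    obtain ⟨m', rfl⟩ := hshe s hs
    obtain ⟨j, hj, e⟩ := hge2 m'
    have : (2 : ℝ) ≤ j := by exact_mod_cast hj
    rw [normOf_eq, e]; linarith
  · rintro ⟨s, ⟨-, hs⟩, hs17⟩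
    have hs' : s = 17 / 4 := by linarith
    subst hs'
    have hge : ∀ m, (17 / 4 : ℝ) ≤ ‖u + vec b m‖ ^ 2 := by
      intro m
      rw [← normOf_eq]
      exact hs ⟨_, hshv m, rfl⟩
    have hS : (fun τ : UpperHalfPlane => thS b u τ) =O[UpperHalfPlane.atImInfty]
      fun τ => Real.exp (-Real.pi * (17 / 4) * τ.im) := (famL b u).O (17 / 4) hge
    have h3 := hS.sub G3_O
    have h1 : (fun τ : UpperHalfPlane => thL b τ - G1 τ) =O[UpperHalfPlane.atImInfty]
        fun τ => Real.exp (-Real.pi * 4 * τ.im) := by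
      have := (hf1.trans (exp_mono_isO (by norm_num : (4 : ℝ) ≤ 5))).add
        ((exp_isO 4).const_mul_left ((numVecsOfNorm L 4 : ℂ) - 15170))
      refine this.congr_left (fun τ => ?_)
      ring
    obtain ⟨hv, -⟩ := vanish huni b hb u hu 4 (17 / 4) (by norm_num) h1 h3
    have hz := coef_zero ((numVecsOfNorm L 4 : ℂ) - 15170) 4 5 (by norm_num) (hf1.neg_left.congr_left (fun τ => by
      rw [hv τ τ.2]; ring))
    have : (numVecsOfNorm L 4 : ℂ) = 15170 := sub_eq_zero.mp hz
    exact_mod_cast this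
end
end

section
/- There exists an odd unimodular lattice L in dimension 41 having minimum norm 4 with σ(L) = 17. -/
open scoped RealInnerProductSpace

noncomputable section

/-! ### Data: a binary doubly-even `[41,9]` code, lifted to `ℤ/4ℤ`

`gg i` (`i < 9`) are integer vectors with entries in `{0,1,2}`, pairwise inner products divisible
by `4`, whose reductions mod 2 generate a code with weights `16,20,24,28` and dual distance `4`.
The lattice is `{v/2}` with `v` ranging over the `ℤ/4ℤ`-code generated by the `gg i` and twice the
dual binary code. -/

/-- base-4 packed entries of the generator vectors -/
def packedG : ℕ :=
  24120314972518218520477010311570184925162355049450209190243792082284268251445245345759241830504627204414431849186145858131051603273153188737362540425417330651367785637406966763413519849807981653071748699162203682501558273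

/-- base-4 packed entries (shifted by one) of a characteristic vector of norm 17 -/
def packedW : ℕ := 1687754466163880026736149

def gN (i j : ℕ) : ℕ := packedG / 4 ^ (41 * i + j) % 4

def gg (i : Fin 9) (j : Fin 41) : ℤ := (gN i.val j.val : ℤ)

def ww (j : Fin 41) : ℤ := ((packedW / 4 ^ j.val % 4 : ℕ) : ℤ) - 1

/-- the information positions -/
def io (i : Fin 9) : Fin 41 := ⟨i.val, by omega⟩

/-- membership in the `ℤ/4ℤ`-code -/
def PP (v : Fin 41 → ℤ) : Prop :=
  (∀ j, 2 ∣ v j - ∑ i, v (io i) * gg i j) ∧ ∀ i, 4 ∣ gg i ⬝ᵥ v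

lemma gg_gram : ∀ i k : Fin 9, 4 ∣ gg i ⬝ᵥ gg k := by
  unfold dotProduct
  decide +kernel

lemma gg_sys : ∀ i k : Fin 9, 2 ∣ gg i (io k) - (if k = i then 1 else 0) := by
  decide +kernel

lemma gg_even : ∀ i : Fin 9, 2 ∣ ∑ j, gg i j := by
  decide +kernel

lemma ww_char : ∀ i : Fin 9, 8 ∣ (2 * (∑ j, ww j * gg i j) - ∑ j, gg i j * gg i j) := by
  decide +kernel

lemma ww_norm : ∑ j, ww j * ww j = 17 := by
  decide +kernel

lemma ww_code : ∀ j : Fin 41, 2 ∣ ww j - 1 - ∑ i, (ww (io i) - 1) * gg i j := by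
  decide +kernel

lemma cap1 : ∀ i : Fin 41, ∃ r : Fin 9, gN r i % 2 = 1 := by
  decide +kernel

lemma cap2 : ∀ i j : Fin 41, i < j → ∃ r : Fin 9, (gN r i + gN r j) % 2 = 1 := by
  decide +kernel

/-- packed columns of the binary code -/
def packedC : ℕ :=
  73373298616634467925009040234334991887939003611815016239368279454531099844030311410795509224475304462130349057

/-- indicator of the set of columns -/
def colMask : ℕ :=
  1738992272413479557321481008982689321248700927218870122661425446763181729736116836394560484145947486894819785340941663498598907047526190817450569826582

/-- packed rows of the binary code -/
def packedR : ℕ :=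
  205096801756629224083292886620689171304025099955187685112195560965041722791019442154418404312841542423045159937

def colN (j : ℕ) : ℕ := packedC / 512 ^ j % 512

def rowN (i : ℕ) : ℕ := packedR / 2199023255552 ^ i % 2199023255552

lemma par_xor (x y j : ℕ) : (x ^^^ y) / 2 ^ j % 2 = (x / 2 ^ j % 2 + y / 2 ^ j % 2) % 2 := by
  have h := Nat.testBit_xor x y j
  simp only [Nat.testBit_eq_decide_div_mod_eq] at h
  rcases Nat.mod_two_eq_zero_or_one (x / 2 ^ j) with hx | hx <;>
  rcases Nat.mod_two_eq_zero_or_one (y / 2 ^ j) with hy | hy <;>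
  simp [hx, hy] at h ⊢ <;> omega

lemma colN_bits : ∀ (r : Fin 9) (j : Fin 41), colN j / 2 ^ r.val % 2 = gN r j % 2 := by
  decide +kernel

lemma rowN_bits : ∀ (r : Fin 9) (j : Fin 41), rowN r / 2 ^ j.val % 2 = gN r j % 2 := by
  decide +kernel

lemma colMask_self : ∀ j : Fin 41, colMask / 2 ^ colN j % 2 = 1 := by
  decide +kernel

lemma colMask_pair : ∀ i j : Fin 41, i < j → colMask / 2 ^ (colN i ^^^ colN j) % 2 = 0 := by
  decide +kernel

lemma cap3 (i j k : Fin 41) (hij : i < j) :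
    ∃ r : Fin 9, (gN r i + gN r j + gN r k) % 2 = 1 := by
  by_contra hcon
  push Not at hcon
  have hlt : ∀ j, colN j < 2 ^ 9 := fun j => Nat.mod_lt _ (by norm_num)
  have h : colN k = colN i ^^^ colN j := by
    refine Nat.eq_of_testBit_eq fun r => ?_
    by_cases hr : r < 9
    · simp only [Nat.testBit_eq_decide_div_mod_eq]
      congr 1
      have h0 := hcon ⟨r, hr⟩
      have h1 := colN_bits ⟨r, hr⟩ i
      have h2 := colN_bits ⟨r, hr⟩ j
      have h3 := colN_bits ⟨r, hr⟩ k
      simp only at h0 h1 h2 h3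
      rw [par_xor, h1, h2, h3]
      apply propext
      omega
    · have h9 : 2 ^ 9 ≤ 2 ^ r := Nat.pow_le_pow_right (by norm_num) (by omega)
      rw [Nat.testBit_lt_two_pow ((hlt _).trans_le h9),
        Nat.testBit_lt_two_pow ((Nat.xor_lt_two_pow (hlt _) (hlt _)).trans_le h9)]
  have h1 := colMask_self k
  rw [h, colMask_pair i j hij] at h1
  omega

def wtSum (f : ℕ → ℕ) : ℕ → ℕ
  | 0 => 0
  | n + 1 => wtSum f n + f n % 2

lemma wtSum_congr {f g : ℕ → ℕ} {n : ℕ} (h : ∀ j < n, f j % 2 = g j % 2) :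
    wtSum f n = wtSum g n := by
  induction n with
  | zero => rfl
  | succ n ih => rw [wtSum, wtSum, ih fun j hj => h j (by omega), h n (by omega)]

/-- a binary code word, packed -/
def wordN (b0 b1 b2 b3 b4 b5 b6 b7 b8 : Fin 2) : ℕ :=
  (b0.val * rowN 0) ^^^ (b1.val * rowN 1) ^^^ (b2.val * rowN 2) ^^^ (b3.val * rowN 3) ^^^ (b4.val * rowN 4) ^^^ (b5.val * rowN 5) ^^^ (b6.val * rowN 6) ^^^ (b7.val * rowN 7) ^^^ (b8.val * rowN 8)

lemma wordN_bits (b0 b1 b2 b3 b4 b5 b6 b7 b8 : Fin 2) (j : ℕ) (hj : j < 41) :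
    wordN b0 b1 b2 b3 b4 b5 b6 b7 b8 / 2 ^ j % 2
      = (b0.val * gN 0 j + b1.val * gN 1 j + b2.val * gN 2 j
      + b3.val * gN 3 j + b4.val * gN 4 j + b5.val * gN 5 j
      + b6.val * gN 6 j + b7.val * gN 7 j + b8.val * gN 8 j) % 2 := by
  have key : ∀ (b : Fin 2) (r : Fin 9), b.val * rowN r / 2 ^ j % 2 = b.val * gN r j % 2 := by
    intro b r
    fin_cases b
    · simp
    · simpa using rowN_bits r ⟨j, hj⟩
  have k0 := key b0 0
  have k1 := key b1 1
  have k2 := key b2 2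
  have k3 := key b3 3
  have k4 := key b4 4
  have k5 := key b5 5
  have k6 := key b6 6
  have k7 := key b7 7
  have k8 := key b8 8
  simp only [wordN, par_xor]
  norm_num at k0 k1 k2 k3 k4 k5 k6 k7 k8 ⊢
  omega

lemma word_check : ∀ b0 b1 b2 b3 b4 b5 b6 b7 b8 : Fin 2,
    (16 ≤ wtSum (fun j => wordN b0 b1 b2 b3 b4 b5 b6 b7 b8 / 2 ^ j) 41 ∨
      (b0.val + b1.val + b2.val + b3.val + b4.val
      + b5.val + b6.val + b7.val + b8.val = 0)) ∧
    wtSum (fun j => wordN b0 b1 b2 b3 b4 b5 b6 b7 b8 / 2 ^ j) 41 ≤ 28 := by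
  decide +kernel

lemma wt_check (b0 b1 b2 b3 b4 b5 b6 b7 b8 : Fin 2) :
    (16 ≤ wtSum (fun j => b0.val * gN 0 j + b1.val * gN 1 j + b2.val * gN 2 j
      + b3.val * gN 3 j + b4.val * gN 4 j + b5.val * gN 5 j
      + b6.val * gN 6 j + b7.val * gN 7 j + b8.val * gN 8 j) 41 ∨
      (b0.val + b1.val + b2.val + b3.val + b4.val
      + b5.val + b6.val + b7.val + b8.val = 0)) ∧
    wtSum (fun j => b0.val * gN 0 j + b1.val * gN 1 j + b2.val * gN 2 j
      + b3.val * gN 3 j + b4.val * gN 4 j + b5.val * gN 5 j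
      + b6.val * gN 6 j + b7.val * gN 7 j + b8.val * gN 8 j) 41 ≤ 28 := by
  have h := word_check b0 b1 b2 b3 b4 b5 b6 b7 b8
  rwa [wtSum_congr fun j hj => wordN_bits b0 b1 b2 b3 b4 b5 b6 b7 b8 j hj] at h

/-! ### Integer arithmetic of the code -/

lemma wtSum_eq (f : ℕ → ℕ) (n : ℕ) : wtSum f n = ∑ j ∈ Finset.range n, f j % 2 := by
  induction n with
  | zero => rfl
  | succ n ih => rw [wtSum, Finset.sum_range_succ, ih]

/-- weights of the binary code, phrased with integer coefficients -/
lemma wt_int (a : Fin 9 → ℤ) :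
    ((∃ i, a i % 2 = 1) → 16 ≤ ∑ j, (∑ i, a i * gg i j) % 2) ∧
      ∑ j, (∑ i, a i * gg i j) % 2 ≤ 28 := by
  have hb : ∀ i, ∃ b : Fin 2, a i % 2 = (b.val : ℤ) := fun i => by
    rcases Int.emod_two_eq_zero_or_one (a i) with h | h
    · exact ⟨0, by simpa using h⟩
    · exact ⟨1, by simpa using h⟩
  choose b hb using hb
  have key := wt_check (b 0) (b 1) (b 2) (b 3) (b 4) (b 5) (b 6) (b 7) (b 8)
  set f : ℕ → ℕ := fun j => (b 0).val * gN 0 j + (b 1).val * gN 1 j + (b 2).val * gN 2 j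
    + (b 3).val * gN 3 j + (b 4).val * gN 4 j + (b 5).val * gN 5 j + (b 6).val * gN 6 j
    + (b 7).val * gN 7 j + (b 8).val * gN 8 j with hf
  have hs : ∑ j, (∑ i, a i * gg i j) % 2 = ((wtSum f 41 : ℕ) : ℤ) := by
    rw [wtSum_eq, ← Fin.sum_univ_eq_sum_range (fun j => f j % 2) 41, Nat.cast_sum]
    refine Finset.sum_congr rfl fun j _ => ?_
    have h1 : (f j.val : ℤ) = ∑ i : Fin 9, ((b i).val : ℤ) * gg i j := by
      simp [hf, Fin.sum_univ_succ, gg]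
      ring
    push_cast
    rw [h1, Finset.sum_int_mod, Finset.sum_int_mod (f := fun i => ((b i).val : ℤ) * gg i j)]
    congr 1
    refine Finset.sum_congr rfl fun i _ => ?_
    rw [← hb]
    exact ((Int.mod_modEq (a i) 2).symm.mul_right _)
  rw [hs]
  refine ⟨fun ⟨i, hi⟩ => ?_, by exact_mod_cast key.2⟩
  rcases key.1 with h | h
  · exact_mod_cast h
  · exfalso
    have hall : ∀ i, (b i).val = 0 := by
      intro i
      fin_cases i <;> simp <;> omega
    have := hb i
    rw [hall i] at this
    omega

lemma PP.add {v w : Fin 41 → ℤ} (hv : PP v) (hw : PP w) : PP (v + w) := by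
  refine ⟨fun j => ?_, fun i => ?_⟩
  · have := dvd_add (hv.1 j) (hw.1 j)
    have e : (v + w) j - ∑ i, (v + w) (io i) * gg i j
        = (v j - ∑ i, v (io i) * gg i j) + (w j - ∑ i, w (io i) * gg i j) := by
      simp only [Pi.add_apply, add_mul, Finset.sum_add_distrib]
      ring
    rwa [e]
  · rw [dotProduct_add]
    exact dvd_add (hv.2 i) (hw.2 i)

lemma PP.smul {v : Fin 41 → ℤ} (hv : PP v) (a : ℤ) : PP (a • v) := by
  refine ⟨fun j => ?_, fun i => ?_⟩
  · have := (hv.1 j).mul_left a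
    have e : (a • v) j - ∑ i, (a • v) (io i) * gg i j
        = a * (v j - ∑ i, v (io i) * gg i j) := by
      simp only [Pi.smul_apply, smul_eq_mul, mul_sub, Finset.mul_sum, mul_assoc]
    rwa [e]
  · rw [dotProduct_smul]
    exact (hv.2 i).mul_left a

lemma PP_two {d : Fin 41 → ℤ} (hd : ∀ i, 2 ∣ gg i ⬝ᵥ d) : PP ((2 : ℤ) • d) := by
  refine ⟨fun j => ?_, fun i => ?_⟩
  · refine dvd_sub (by simp) (Finset.dvd_sum fun i _ => ?_)
    simp [mul_assoc]
  · rw [dotProduct_smul, smul_eq_mul]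
    obtain ⟨k, hk⟩ := hd i
    exact ⟨k, by rw [hk]; ring⟩

lemma PP_zero : PP 0 := ⟨fun j => by simp, fun i => by simp⟩

lemma PP_gg (k : Fin 9) : PP (gg k) := by
  refine ⟨fun j => ?_, fun i => gg_gram i k⟩
  have h : gg k j = ∑ i, (if i = k then 1 else 0) * gg i j := by simp
  have : gg k j - ∑ i, gg k (io i) * gg i j
      = ∑ i, -((gg k (io i) - (if i = k then 1 else 0)) * gg i j) := by
    conv_lhs => rw [h]
    rw [← Finset.sum_sub_distrib]
    exact Finset.sum_congr rfl fun i _ => by ring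
  rw [this]
  exact Finset.dvd_sum fun i _ => (((gg_sys k i).mul_right _).neg_right)

lemma PP_sum (a : Fin 9 → ℤ) (s : Finset (Fin 9)) : PP (∑ i ∈ s, a i • gg i) := by
  classical
  induction s using Finset.induction_on with
  | empty => simpa using PP_zero
  | insert i s hi ih =>
    rw [Finset.sum_insert hi]
    exact ((PP_gg i).smul _).add ih

/-- decomposition of a code vector -/
lemma PP.decomp {v : Fin 41 → ℤ} (hv : PP v) :
    ∃ d : Fin 41 → ℤ, v = (∑ i, v (io i) • gg i) + (2 : ℤ) • d ∧ ∀ i, 2 ∣ gg i ⬝ᵥ d := by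
  choose d hd using hv.1
  have hvd : v = (∑ i, v (io i) • gg i) + (2 : ℤ) • d := by
    funext j
    simp only [Pi.add_apply, Finset.sum_apply, Pi.smul_apply, smul_eq_mul]
    linarith [hd j]
  refine ⟨d, hvd, fun i => ?_⟩
  have h1 := hv.2 i
  rw [hvd, dotProduct_add, dotProduct_smul, smul_eq_mul] at h1
  have h2 := (PP_sum (fun i => v (io i)) Finset.univ).2 i
  have h3 := (Int.dvd_add_right h2).1 h1
  omega

lemma PP.dot {v w : Fin 41 → ℤ} (hv : PP v) (hw : PP w) : 4 ∣ v ⬝ᵥ w := by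
  obtain ⟨d, hd, hd2⟩ := hv.decomp
  obtain ⟨e, he, he2⟩ := hw.decomp
  have h1 : 4 ∣ (∑ i, v (io i) • gg i) ⬝ᵥ w := by
    rw [sum_dotProduct]
    refine Finset.dvd_sum fun i _ => ?_
    rw [smul_dotProduct]
    exact (hw.2 i).mul_left _
  have h2 : 2 ∣ d ⬝ᵥ w := by
    rw [he, dotProduct_add, dotProduct_smul, dotProduct_sum]
    refine dvd_add (Finset.dvd_sum fun i _ => ?_) (by simp)
    rw [dotProduct_smul, dotProduct_comm]
    exact (hd2 i).mul_left _
  rw [hd, add_dotProduct, smul_dotProduct, smul_eq_mul]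
  refine dvd_add h1 ?_
  obtain ⟨k, hk⟩ := h2
  exact ⟨k, by rw [hk]; ring⟩

/-- dual code words -/
def cc (j : Fin 41) : Fin 41 → ℤ := Pi.single j 1 + ∑ i, gg i j • Pi.single (io i) 1

lemma dot_cc (v : Fin 41 → ℤ) (j : Fin 41) : v ⬝ᵥ cc j = v j + ∑ i, v (io i) * gg i j := by
  rw [cc, dotProduct_add, dotProduct_sum]
  congr 1
  · simp
  · refine Finset.sum_congr rfl fun i _ => ?_
    rw [dotProduct_smul, smul_eq_mul, mul_comm]
    simp

lemma PP_cc (j : Fin 41) : PP ((2 : ℤ) • cc j) := by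
  refine PP_two fun i => ?_
  rw [dot_cc]
  have h := (PP_gg i).1 j
  omega

lemma PP_single (j : Fin 41) : PP ((4 : ℤ) • Pi.single j 1) := by
  have : (4 : ℤ) • (Pi.single j 1 : Fin 41 → ℤ) = (2 : ℤ) • ((2 : ℤ) • Pi.single j 1) := by
    rw [smul_smul]; norm_num
  rw [this]
  refine PP_two fun i => ?_
  rw [dotProduct_smul, smul_eq_mul]
  exact dvd_mul_right _ _

lemma PP_of_dual {v : Fin 41 → ℤ} (h : ∀ w, PP w → 4 ∣ v ⬝ᵥ w) : PP v := by
  refine ⟨fun j => ?_, fun i => ?_⟩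
  · have := h _ (PP_cc j)
    rw [dotProduct_smul, smul_eq_mul, dot_cc] at this
    omega
  · rw [dotProduct_comm]
    exact h _ (PP_gg i)

lemma emod_le_sq (x : ℤ) : x % 2 ≤ x * x := by
  rcases Int.emod_two_eq_zero_or_one x with h | h
  · rw [h]; exact mul_self_nonneg x
  · rw [h]
    have : x ≠ 0 := by rintro rfl; simp at h
    have := mul_self_pos.2 this
    omega

/-- the dual binary code has minimum weight at least four -/
lemma cap_norm {u : Fin 41 → ℤ} (hu : ∀ i, 2 ∣ gg i ⬝ᵥ u) (h0 : u ≠ 0) : 4 ≤ u ⬝ᵥ u := by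
  by_contra hlt
  have hlt : u ⬝ᵥ u ≤ 3 := by omega
  have hle : ∀ j, u j * u j ≤ 3 := fun j => le_trans
    (Finset.single_le_sum (f := fun j => u j * u j) (fun k _ => mul_self_nonneg (u k))
      (Finset.mem_univ j)) hlt
  have hpm : ∀ j, u j ≠ 0 → u j % 2 = 1 ∧ u j * u j = 1 := by
    intro j hj
    have h1 : u j < 2 := by nlinarith [hle j]
    have h2 : -2 < u j := by nlinarith [hle j]
    have : u j = 1 ∨ u j = -1 := by omega
    rcases this with h | h <;> rw [h] <;> norm_num
  set T := Finset.univ.filter fun j => u j ≠ 0 with hT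
  have hcard : (T.card : ℤ) = u ⬝ᵥ u := by
    rw [dotProduct, Finset.card_eq_sum_ones, Nat.cast_sum, hT, Finset.sum_filter]
    refine Finset.sum_congr rfl fun j _ => ?_
    by_cases h : u j = 0
    · simp [h]
    · simp [h, (hpm j h).2]
  have hpar : ∀ r : Fin 9, (∑ j ∈ T, gN r.val j.val) % 2 = 0 := by
    intro r
    have h1 : gg r ⬝ᵥ u = ∑ j ∈ T, gg r j * u j := by
      rw [dotProduct, hT, Finset.sum_filter]
      refine Finset.sum_congr rfl fun j _ => ?_
      by_cases h : u j = 0 <;> simp [h]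
    have h2 : (2 : ℤ) ∣ ∑ j ∈ T, gg r j * u j - ∑ j ∈ T, gg r j := by
      rw [← Finset.sum_sub_distrib]
      refine Finset.dvd_sum fun j hj => ?_
      have h3 := (hpm j (by simpa [hT] using hj)).1
      have : gg r j * u j - gg r j = gg r j * (u j - 1) := by ring
      rw [this]
      exact Dvd.dvd.mul_left (by omega) _
    have h4 := hu r
    rw [h1] at h4
    have h5 : (2 : ℤ) ∣ ∑ j ∈ T, gg r j := by omega
    have h6 : (∑ j ∈ T, gg r j) = ((∑ j ∈ T, gN r.val j.val : ℕ) : ℤ) := by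
      rw [Nat.cast_sum]; rfl
    rw [h6] at h5
    omega
  have hT3 : T.card ≤ 3 := by omega
  have hT0 : T.card ≠ 0 := by
    intro h
    apply h0
    funext j
    by_contra hj
    have : j ∈ T := by simpa [hT] using hj
    rw [Finset.card_eq_zero.1 h] at this
    simp at this
  have hord : T = Finset.univ.image (T.orderEmbOfFin rfl) := by
    ext j
    simp
  have hsum : ∀ r : Fin 9, ∑ j ∈ T, gN r.val j.val
      = ∑ k, gN r.val (T.orderEmbOfFin rfl k).val := by
    intro r
    conv_lhs => rw [hord]
    rw [Finset.sum_image fun x _ y _ h => (T.orderEmbOfFin rfl).injective h]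
  generalize (T.orderEmbOfFin rfl) = e at hsum
  clear hord
  generalize hn : T.card = n at *
  interval_cases n
  · simp at hT0
  · obtain ⟨r, hr⟩ := cap1 (e 0)
    have := hpar r
    rw [hsum r, Fin.sum_univ_one] at this
    omega
  · obtain ⟨r, hr⟩ := cap2 (e 0) (e 1) (e.lt_iff_lt.2 (by decide))
    have := hpar r
    rw [hsum r, Fin.sum_univ_two] at this
    omega
  · obtain ⟨r, hr⟩ := cap3 (e 0) (e 1) (e 2) (e.lt_iff_lt.2 (by decide))
    have := hpar r
    rw [hsum r, Fin.sum_univ_three] at this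
    omega

lemma PP.min {v : Fin 41 → ℤ} (hv : PP v) (h0 : v ≠ 0) : 16 ≤ v ⬝ᵥ v := by
  by_cases h : ∃ i, v (io i) % 2 = 1
  · have h1 := (wt_int fun i => v (io i)).1 h
    refine h1.trans (Finset.sum_le_sum fun j _ => ?_)
    have := hv.1 j
    have h2 : (∑ i, v (io i) * gg i j) % 2 = v j % 2 := by omega
    rw [h2]
    exact emod_le_sq _
  · push Not at h
    have he : ∀ j, 2 ∣ v j := by
      intro j
      have h1 : (2 : ℤ) ∣ ∑ i, v (io i) * gg i j :=
        Finset.dvd_sum fun i _ => Dvd.dvd.mul_right (by have := h i; omega) _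
      have := hv.1 j
      omega
    choose u hu using he
    have hvu : v = (2 : ℤ) • u := by
      funext j
      simp [hu j]
    have h4 : 4 ≤ u ⬝ᵥ u := by
      refine cap_norm (fun i => ?_) ?_
      · have := hv.2 i
        rw [hvu, dotProduct_smul, smul_eq_mul] at this
        omega
      · rintro rfl
        exact h0 (by simpa using hvu)
    rw [hvu, dotProduct_smul, smul_dotProduct, smul_eq_mul, smul_eq_mul]
    omega

/-- characteristic vectors have norm at least 17 -/
lemma char_norm {v : Fin 41 → ℤ} (h : ∀ w, PP w → 8 ∣ v ⬝ᵥ w - w ⬝ᵥ w) : 68 ≤ v ⬝ᵥ v := by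
  have he : ∀ j, 2 ∣ v j := by
    intro j
    have := h _ (PP_single j)
    simp only [dotProduct_smul, smul_eq_mul, dotProduct_single, Pi.smul_apply,
      Pi.single_eq_same] at this
    omega
  choose u hu using he
  have hvu : v = (2 : ℤ) • u := by
    funext j
    simp [hu j]
  have hodd : ∀ j, 2 ∣ (u j - 1) - ∑ i, (u (io i) - 1) * gg i j := by
    intro j
    have h1 := h _ (PP_cc j)
    simp only [hvu, dotProduct_smul, smul_dotProduct, smul_eq_mul] at h1
    have h2 : (2 : ℤ) ∣ cc j ⬝ᵥ cc j - 1 ⬝ᵥ cc j := by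
      rw [← sub_dotProduct]
      refine Finset.dvd_sum fun l _ => ?_
      have h3 : (cc j - 1) l * cc j l = cc j l * (cc j l - 1) := by
        simp; ring
      rw [h3]
      exact (Int.even_mul_pred_self _).two_dvd
    rw [dot_cc u] at h1
    rw [dot_cc 1] at h2
    simp only [sub_mul, Finset.sum_sub_distrib]
    simp only [Pi.one_apply] at h2
    omega
  set m : Fin 41 → ℤ := ∑ i, (u (io i) - 1) • gg i with hm
  have hmj : ∀ j, m j = ∑ i, (u (io i) - 1) * gg i j := by
    intro j
    simp [hm, Finset.sum_apply]
  have hmP : PP m := PP_sum (fun i => u (io i) - 1) Finset.univ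
  have h1 := h m hmP
  have h2 : (8 : ℤ) ∣ (m - u) ⬝ᵥ (m - u) - 41 := by
    have : (m - u) ⬝ᵥ (m - u) - 41 = ∑ j, ((m - u) j * (m - u) j - 1) := by
      rw [Finset.sum_sub_distrib]; simp [dotProduct]
    rw [this]
    refine Finset.dvd_sum fun j _ => ?_
    have h3 := hodd j
    rw [← hmj] at h3
    obtain ⟨k, hk⟩ : ∃ k, m j - u j = 2 * k + 1 := ⟨(m j - u j) / 2, by omega⟩
    obtain ⟨q, hq⟩ := (Int.even_mul_succ_self k).two_dvd
    refine ⟨q, ?_⟩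
    rw [Pi.sub_apply, hk]
    linear_combination 4 * hq
  have h3 : 13 ≤ u ⬝ᵥ u := by
    have hw := (wt_int fun i => u (io i) - 1).2
    have : ∑ j, (1 - (∑ i, (u (io i) - 1) * gg i j) % 2) ≤ u ⬝ᵥ u := by
      refine Finset.sum_le_sum fun j _ => ?_
      have h4 := hodd j
      have h5 := emod_le_sq (u j)
      omega
    rw [Finset.sum_sub_distrib] at this
    simp at this hw
    omega
  have h4 : (m - u) ⬝ᵥ (m - u) = m ⬝ᵥ m - 2 * (u ⬝ᵥ m) + u ⬝ᵥ u := by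
    rw [sub_dotProduct, dotProduct_sub, dotProduct_sub, dotProduct_comm m u]
    ring
  simp only [hvu, dotProduct_smul, smul_dotProduct, smul_eq_mul] at h1 ⊢
  omega

/-- twice the explicit characteristic vector is characteristic -/
lemma ww_isChar {v : Fin 41 → ℤ} (hv : PP v) :
    8 ∣ ((2 : ℤ) • ww) ⬝ᵥ v - v ⬝ᵥ v := by
  have hadd : ∀ x y, PP x → PP y → 8 ∣ ((2 : ℤ) • ww) ⬝ᵥ x - x ⬝ᵥ x →
      8 ∣ ((2 : ℤ) • ww) ⬝ᵥ y - y ⬝ᵥ y →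
      8 ∣ ((2 : ℤ) • ww) ⬝ᵥ (x + y) - (x + y) ⬝ᵥ (x + y) := by
    intro x y hx hy h1 h2
    have h3 := hx.dot hy
    rw [dotProduct_add, dotProduct_add, add_dotProduct, add_dotProduct, dotProduct_comm y x]
    omega
  have hg : ∀ (a : ℤ) i, 8 ∣ ((2 : ℤ) • ww) ⬝ᵥ (a • gg i) - (a • gg i) ⬝ᵥ (a • gg i) := by
    intro a i
    have h1 : (8 : ℤ) ∣ 2 * (ww ⬝ᵥ gg i) - gg i ⬝ᵥ gg i := ww_char i
    obtain ⟨k, hk⟩ := h1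
    obtain ⟨l, hl⟩ := gg_gram i i
    obtain ⟨q, hq⟩ := (Int.even_mul_pred_self a).two_dvd
    simp only [dotProduct_smul, smul_dotProduct, smul_eq_mul]
    refine ⟨a * k - q * l, ?_⟩
    linear_combination a * hk - 4 * l * hq - (a * (a - 1)) * hl
  have hs : ∀ (a : Fin 9 → ℤ) (s : Finset (Fin 9)),
      8 ∣ ((2 : ℤ) • ww) ⬝ᵥ (∑ i ∈ s, a i • gg i)
        - (∑ i ∈ s, a i • gg i) ⬝ᵥ (∑ i ∈ s, a i • gg i) := by
    intro a s
    classical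
    induction s using Finset.induction_on with
    | empty => simp
    | insert i s hi ih =>
      rw [Finset.sum_insert hi]
      exact hadd _ _ ((PP_gg i).smul _) (PP_sum a s) (hg _ _) ih
  obtain ⟨d, hd, hd2⟩ := hv.decomp
  rw [hd]
  refine hadd _ _ (PP_sum (fun i => v (io i)) Finset.univ) (PP_two hd2) (hs _ _) ?_
  have h1 : (2 : ℤ) ∣ (ww - 1 - ∑ i, (ww (io i) - 1) • gg i) ⬝ᵥ d := by
    refine Finset.dvd_sum fun j _ => Dvd.dvd.mul_right ?_ _
    simpa [Finset.sum_apply] using ww_code j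
  have h2 : (2 : ℤ) ∣ (∑ i, (ww (io i) - 1) • gg i) ⬝ᵥ d := by
    rw [sum_dotProduct]
    refine Finset.dvd_sum fun i _ => ?_
    rw [smul_dotProduct]
    exact (hd2 i).mul_left _
  have h3 : (2 : ℤ) ∣ d ⬝ᵥ d - 1 ⬝ᵥ d := by
    rw [← sub_dotProduct]
    refine Finset.dvd_sum fun l _ => ?_
    have h3 : (d - 1) l * d l = d l * (d l - 1) := by
      simp; ring
    rw [h3]
    exact (Int.even_mul_pred_self _).two_dvd
  rw [sub_dotProduct, sub_dotProduct] at h1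
  simp only [dotProduct_smul, smul_dotProduct, smul_eq_mul]
  omega

lemma PP_ones : PP ((2 : ℤ) • 1) := by
  refine PP_two fun i => ?_
  have := gg_even i
  simpa [dotProduct] using this

/-! ### The lattice -/

/-- the vector `v / 2` of `ℝ⁴¹` -/
def half (v : Fin 41 → ℤ) : EuclideanSpace ℝ (Fin 41) := WithLp.toLp 2 fun j => (v j : ℝ) / 2

def LL : Set (EuclideanSpace ℝ (Fin 41)) := {x | ∃ v, PP v ∧ x = half v}

lemma inner_half (v w : Fin 41 → ℤ) : ⟪half v, half w⟫ = ((v ⬝ᵥ w : ℤ) : ℝ) / 4 := by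
  simp only [half, PiLp.inner_apply, dotProduct, Int.cast_sum, Finset.sum_div]
  refine Finset.sum_congr rfl fun j _ => ?_
  simp
  ring

lemma LL_unimodular : LL = dualSet LL := by
  ext x
  constructor
  · rintro ⟨v, hv, rfl⟩ y ⟨w, hw, rfl⟩
    obtain ⟨k, hk⟩ := hv.dot hw
    refine ⟨k, ?_⟩
    rw [inner_half, hk]
    push_cast
    ring
  · intro hx
    have h1 : ∀ j, ∃ m : ℤ, x j = (m : ℝ) / 2 := by
      intro j
      obtain ⟨m, hm⟩ := hx (half ((4 : ℤ) • Pi.single j 1)) ⟨_, PP_single j, rfl⟩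
      refine ⟨m, ?_⟩
      have h2 : ⟪x, half ((4 : ℤ) • Pi.single j 1)⟫ = 2 * x j := by
        simp only [half, PiLp.inner_apply]
        rw [Finset.sum_eq_single j]
        · simp only [Pi.smul_apply, Pi.single_eq_same, smul_eq_mul, mul_one]
          norm_num
        · intro k _ hk
          simp [hk]
        · simp
      rw [h2] at hm
      linarith
    choose v hv using h1
    have hxv : x = half v := by
      ext j
      simp [half, hv j]
    refine ⟨v, PP_of_dual fun w hw => ?_, hxv⟩
    obtain ⟨m, hm⟩ := hx (half w) ⟨w, hw, rfl⟩
    rw [hxv, inner_half] at hm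
    refine ⟨m, ?_⟩
    have : ((v ⬝ᵥ w : ℤ) : ℝ) = ((4 * m : ℤ) : ℝ) := by
      push_cast
      linarith
    exact_mod_cast this

/-- the even sublattice in terms of the code -/
lemma half_mem_even {w : Fin 41 → ℤ} (hw : PP w) (h8 : 8 ∣ w ⬝ᵥ w) :
    half w ∈ evenSublattice LL := by
  obtain ⟨k, hk⟩ := h8
  refine ⟨⟨w, hw, rfl⟩, k, ?_⟩
  rw [normOf, inner_half, hk]
  push_cast
  ring

lemma shadow_norm {y : EuclideanSpace ℝ (Fin 41)} (hy : y ∈ shadow LL) : 17 / 4 ≤ normOf y := by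
  obtain ⟨hy0, hyL⟩ := hy
  -- twice a shadow vector lies in the lattice
  have h2y : (2 : ℝ) • y ∈ LL := by
    rw [LL_unimodular]
    rintro _ ⟨w, hw, rfl⟩
    obtain ⟨k, hk⟩ := hw.dot hw
    obtain ⟨m, hm⟩ := hy0 _ (half_mem_even (w := (2 : ℤ) • w) (hw.smul 2)
      (by
        simp only [dotProduct_smul, smul_dotProduct, smul_eq_mul]
        omega))
    refine ⟨m, ?_⟩
    rw [← hm]
    have : half ((2 : ℤ) • w) = (2 : ℝ) • half w := by
      ext j
      simp [half]
      ring
    rw [this, inner_smul_left, inner_smul_right]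
    simp
  obtain ⟨v, hv, hyv⟩ := h2y
  have hin : ∀ w, ⟪y, half w⟫ = ((v ⬝ᵥ w : ℤ) : ℝ) / 8 := by
    intro w
    have h1 := inner_half v w
    rw [← hyv, inner_smul_left] at h1
    simp at h1
    linarith
  have hev : ∀ w, PP w → 8 ∣ w ⬝ᵥ w → 8 ∣ v ⬝ᵥ w := by
    intro w hw h8
    obtain ⟨m, hm⟩ := hy0 _ (half_mem_even hw h8)
    rw [hin] at hm
    refine ⟨m, ?_⟩
    have : ((v ⬝ᵥ w : ℤ) : ℝ) = ((8 * m : ℤ) : ℝ) := by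
      push_cast
      linarith
    exact_mod_cast this
  obtain ⟨w0, hw0, hn⟩ : ∃ w0, PP w0 ∧ ¬ 8 ∣ v ⬝ᵥ w0 := by
    by_contra hcon
    push Not at hcon
    apply hyL
    rw [LL_unimodular]
    rintro _ ⟨w, hw, rfl⟩
    obtain ⟨m, hm⟩ := hcon w hw
    refine ⟨m, ?_⟩
    rw [hin, hm]
    push_cast
    ring
  have hchar : ∀ w, PP w → 8 ∣ v ⬝ᵥ w - w ⬝ᵥ w := by
    intro w hw
    have d1 := hv.dot hw
    have d2 := hv.dot hw0
    have d3 := hw.dot hw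
    have d4 := hw0.dot hw0
    have d5 := hw.dot hw0
    by_cases h8 : 8 ∣ w ⬝ᵥ w
    · exact dvd_sub (hev w hw h8) h8
    · have h80 : ¬ 8 ∣ w0 ⬝ᵥ w0 := fun h => hn (hev w0 hw0 h)
      have h1 := hev (w + w0) (hw.add hw0) (by
        rw [dotProduct_add, add_dotProduct, add_dotProduct, dotProduct_comm w0 w]
        omega)
      rw [dotProduct_add] at h1
      omega
  have h68 := char_norm hchar
  have h68' : (68 : ℝ) ≤ ((v ⬝ᵥ v : ℤ) : ℝ) := by exact_mod_cast h68
  have h1 := inner_half v v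
  rw [← hyv, inner_smul_left, inner_smul_right] at h1
  simp at h1
  rw [normOf, real_inner_self_eq_norm_sq]
  linarith

lemma LL_norm_int {x : EuclideanSpace ℝ (Fin 41)} (hx : x ∈ LL) :
    ∃ m : ℤ, normOf x = m := by
  have h := hx
  rw [LL_unimodular] at h
  exact h x hx

lemma shadow_attained : ∃ y ∈ shadow LL, normOf y = 17 / 4 := by
  have hn : normOf ((1 / 2 : ℝ) • half ((2 : ℤ) • ww)) = 17 / 4 := by
    rw [normOf, inner_smul_left, inner_smul_right, inner_half]
    have : (((2 : ℤ) • ww) ⬝ᵥ ((2 : ℤ) • ww)) = 68 := by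
      have h := ww_norm
      simp only [dotProduct_smul, smul_dotProduct, smul_eq_mul]
      rw [dotProduct, h]
      norm_num
    rw [this]
    norm_num
  refine ⟨(1 / 2 : ℝ) • half ((2 : ℤ) • ww), ⟨?_, ?_⟩, hn⟩
  · rintro _ ⟨⟨w, hw, rfl⟩, k, hk⟩
    have h1 := ww_isChar hw
    rw [normOf, inner_half] at hk
    have hk' : ((w ⬝ᵥ w : ℤ) : ℝ) = ((8 * k : ℤ) : ℝ) := by
      push_cast at hk ⊢
      linarith
    have hk2 : w ⬝ᵥ w = 8 * k := by exact_mod_cast hk'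
    obtain ⟨m, hm⟩ : (8 : ℤ) ∣ ((2 : ℤ) • ww) ⬝ᵥ w := by omega
    refine ⟨m, ?_⟩
    rw [inner_smul_left, inner_half, hm]
    simp
    ring
  · intro hmem
    obtain ⟨m, hm⟩ := LL_norm_int hmem
    rw [hn] at hm
    have : (17 : ℝ) = ((4 * m : ℤ) : ℝ) := by
      push_cast
      linarith
    have h2 : (17 : ℤ) = 4 * m := by exact_mod_cast this
    omega

theorem exists_unimodular_dim41_min4_sigma17 :
    ∃ L : Set (EuclideanSpace ℝ (Fin 41)),
      IsUnimodularLattice L ∧ IsOddLattice L ∧ HasMinNorm L 4 ∧ HasSigma L 17 := by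
  refine ⟨LL, LL_unimodular, ?_, ⟨?_, ?_⟩, 17 / 4, ⟨shadow_attained, ?_⟩, by norm_num⟩
  · refine ⟨half ((2 : ℤ) • 1), ⟨_, PP_ones, rfl⟩, 41, by decide, ?_⟩
    rw [normOf, inner_half]
    simp [dotProduct]
    norm_num
  · have h : normOf (half ((4 : ℤ) • Pi.single 0 1)) = 4 := by
      rw [normOf, inner_half]
      have : ((4 : ℤ) • (Pi.single 0 1 : Fin 41 → ℤ)) ⬝ᵥ ((4 : ℤ) • Pi.single 0 1) = 16 := by
        simp only [dotProduct_smul, smul_eq_mul, dotProduct_single, Pi.smul_apply,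
          Pi.single_eq_same]
        norm_num
      rw [this]
      norm_num
    refine ⟨_, ⟨_, PP_single 0, rfl⟩, ?_, h⟩
    intro h0
    rw [h0] at h
    simp [normOf] at h
  · rintro s ⟨x, ⟨v, hv, rfl⟩, hx0, rfl⟩
    have hv0 : v ≠ 0 := by
      rintro rfl
      apply hx0
      ext j
      simp [half]
    have h16 : (16 : ℝ) ≤ ((v ⬝ᵥ v : ℤ) : ℝ) := by exact_mod_cast hv.min hv0
    rw [normOf, inner_half]
    linarith
  · rintro s ⟨y, hy, rfl⟩
    exact shadow_norm hy
end
end
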